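/- (Uniqueness for the subcritical singular Liouville equation on the sphere, planar form; Theorem 1.7(i).) Let N ≥ 0 be an integer, q₁, …, q_N distinct points of ℝ², α₁, …, α_N ∈ (−1, 0), and ρ > 0 with ρ < 4π(2 + Σ_{j=1}^N α_j). Set l = (4π(2 + Σ_j α_j) − ρ)/(4π) and h(x) = (1 + |x|²)^{−l}. Suppose for i = 1, 2 that u_i : ℝ² ∖ {q₁, …, q_N} → ℝ is C² and satisfies: Δu_i(x) + h(x) e^{u_i(x)} = 0 for all x ∈ ℝ² ∖ {q₁, …, q_N}; for each j the function x ↦ u_i(x) − 2α_j ln|x − q_j| extends continuously to q_j; ∫_{ℝ²} h(x) e^{u_i(x)} dx = ρ; and u_i(x) + ((ρ − 4π Σ_j α_j)/(4π)) · ln(1 + |x|²) converges to a finite limit as |x| → ∞. Then u₁ = u₂ on ℝ² ∖ {q₁, …, q_N}. -/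

import Mathlib

open Real MeasureTheory Metric Filter Topology RealInnerProductSpace

noncomputable section

/-- The plane `ℝ²`. -/
abbrev Pl := EuclideanSpace ℝ (Fin 2)

/-- The Laplacian `Δu = ∂²u/∂x₁² + ∂²u/∂x₂²` of a function on `ℝ²`. -/
def lap (u : Pl → ℝ) (x : Pl) : ℝ :=
  ∑ i : Fin 2, fderiv ℝ (fun y => fderiv ℝ u y (EuclideanSpace.single i 1)) x
    (EuclideanSpace.single i 1)

/-- `u` is a solution of the planar form of the singular mean field equation on the
sphere with singular sources `4 pi al(j) delta_(q j)` and total mass `RHO`. -/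
def SphSol (N : ℕ) (q : Fin N → Pl) (al : Fin N → ℝ) (ρ : ℝ) (u : Pl → ℝ) : Prop :=
  ContDiffOn ℝ 2 u (Set.range q)ᶜ ∧
  (∀ x ∉ Set.range q,
    lap u x + (1 + ‖x‖ ^ 2) ^ (-((4*π*(2 + ∑ j, al j) - ρ)/(4*π))) * Real.exp (u x) = 0) ∧
  (∀ j, ∃ L : ℝ, Tendsto (fun x => u x - 2 * al j * Real.log ‖x - q j‖)
      (𝓝[(Set.range q)ᶜ] (q j)) (nhds L)) ∧
  (∫ x : Pl, (1 + ‖x‖ ^ 2) ^ (-((4*π*(2 + ∑ j, al j) - ρ)/(4*π))) * Real.exp (u x) = ρ) ∧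
  (∃ L : ℝ, Tendsto (fun x => u x + ((ρ - 4*π*(∑ j, al j))/(4*π)) * Real.log (1 + ‖x‖ ^ 2))
      (Bornology.cobounded Pl) (nhds L))

/-- partial derivative -/
def pd (i : Fin 2) (f : Pl → ℝ) (x : Pl) : ℝ := fderiv ℝ f x (EuclideanSpace.single i 1)

lemma lap_eq (u : Pl → ℝ) (x : Pl) : lap u x = pd 0 (pd 0 u) x + pd 1 (pd 1 u) x := by
  simp [lap, pd, Fin.sum_univ_two]; rfl

lemma pd_congr {i : Fin 2} {f g : Pl → ℝ} {x : Pl} (h : f =ᶠ[𝓝 x] g) : pd i f x = pd i g x := by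
  simp [pd, h.fderiv_eq]

lemma pd_congr' {i : Fin 2} {f g : Pl → ℝ} {x : Pl} (h : f =ᶠ[𝓝 x] g) :
    pd i f =ᶠ[𝓝 x] pd i g := by
  filter_upwards [h.fderiv (𝕜 := ℝ)] with y hy
  simp [pd, hy]

lemma lap_congr {f g : Pl → ℝ} {x : Pl} (h : f =ᶠ[𝓝 x] g) : lap f x = lap g x := by
  rw [lap_eq, lap_eq, pd_congr (pd_congr' h), pd_congr (pd_congr' h)]

lemma cd_pd {n m : WithTop ℕ∞} {f : Pl → ℝ} {x : Pl} (i : Fin 2) (h : ContDiffAt ℝ n f x)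
    (hm : m + 1 ≤ n) : ContDiffAt ℝ m (pd i f) x :=
  (h.fderiv_right hm).clm_apply contDiffAt_const

lemma cd_ev {f : Pl → ℝ} {x : Pl} {n : ℕ} (h : ContDiffAt ℝ n f x) :
    ∀ᶠ y in 𝓝 x, ContDiffAt ℝ n f y := h.eventually (by simp)

lemma pd_comm {f : Pl → ℝ} {x : Pl} (i j : Fin 2) (h : ContDiffAt ℝ 2 f x) :
    pd i (pd j f) x = pd j (pd i f) x := by
  have hs := h.isSymmSndFDerivAt (by simp)
  have hd : DifferentiableAt ℝ (fderiv ℝ f) x :=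
    (h.fderiv_right (m := 1) (by norm_num)).differentiableAt (by norm_num)
  have key : ∀ i j : Fin 2, pd i (pd j f) x =
      fderiv ℝ (fderiv ℝ f) x (EuclideanSpace.single i 1) (EuclideanSpace.single j 1) := by
    intro i j
    unfold pd
    rw [fderiv_clm_apply hd (differentiableAt_const _)]
    simp
  rw [key, key]
  exact hs _ _

lemma pd_add {f g : Pl → ℝ} {x : Pl} (i : Fin 2) (hf : DifferentiableAt ℝ f x)
    (hg : DifferentiableAt ℝ g x) : pd i (fun y => f y + g y) x = pd i f x + pd i g x := by
  simp [pd, fderiv_fun_add hf hg]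

lemma pd_mul {f g : Pl → ℝ} {x : Pl} (i : Fin 2) (hf : DifferentiableAt ℝ f x)
    (hg : DifferentiableAt ℝ g x) :
    pd i (fun y => f y * g y) x = f x * pd i g x + g x * pd i f x := by
  simp [pd, fderiv_fun_mul hf hg]

lemma pd_const (i : Fin 2) (c : ℝ) (x : Pl) : pd i (fun _ => c) x = 0 := by
  simp [pd]

lemma pd_comp {f : Pl → ℝ} {φ : ℝ → ℝ} {dphi : ℝ} {x : Pl} (i : Fin 2)
    (hf : DifferentiableAt ℝ f x) (hφ : HasDerivAt φ dphi (f x)) :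
    pd i (fun y => φ (f y)) x = dphi * pd i f x := by
  have := hφ.comp_hasFDerivAt x hf.hasFDerivAt
  have h2 : fderiv ℝ (fun y => φ (f y)) x = dphi • fderiv ℝ f x := this.fderiv
  simp [pd, h2]

lemma da {f : Pl → ℝ} {x : Pl} (h : ContDiffAt ℝ 2 f x) : DifferentiableAt ℝ f x :=
  h.differentiableAt (by norm_num)

lemma da1 {f : Pl → ℝ} {x : Pl} (i : Fin 2) (h : ContDiffAt ℝ 2 f x) :
    DifferentiableAt ℝ (pd i f) x :=
  (cd_pd (m := 1) i h (by norm_num)).differentiableAt (by norm_num)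

lemma lap_add {f g : Pl → ℝ} {x : Pl} (hf : ContDiffAt ℝ 2 f x) (hg : ContDiffAt ℝ 2 g x) :
    lap (fun y => f y + g y) x = lap f x + lap g x := by
  have key : ∀ i, pd i (pd i (fun y => f y + g y)) x = pd i (pd i f) x + pd i (pd i g) x := by
    intro i
    rw [← pd_add i (da1 i hf) (da1 i hg)]
    apply pd_congr
    filter_upwards [cd_ev (n := 2) hf, cd_ev (n := 2) hg] with y h1 h2
    exact pd_add i (da h1) (da h2)
  rw [lap_eq, lap_eq, lap_eq, key, key]; ring

lemma lap_mul {f g : Pl → ℝ} {x : Pl} (hf : ContDiffAt ℝ 2 f x) (hg : ContDiffAt ℝ 2 g x) :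
    lap (fun y => f y * g y) x = f x * lap g x + g x * lap f x
      + 2 * (pd 0 f x * pd 0 g x + pd 1 f x * pd 1 g x) := by
  have key : ∀ i, pd i (pd i (fun y => f y * g y)) x =
      f x * pd i (pd i g) x + g x * pd i (pd i f) x + 2 * (pd i f x * pd i g x) := by
    intro i
    have : pd i (pd i (fun y => f y * g y)) x =
        pd i (fun y => f y * pd i g y + g y * pd i f y) x := by
      apply pd_congr
      filter_upwards [cd_ev (n := 2) hf, cd_ev (n := 2) hg] with y h1 h2
      exact pd_mul i (da h1) (da h2)
    rw [this, pd_add i ((da hf).fun_mul (da1 i hg)) ((da hg).fun_mul (da1 i hf)),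
      pd_mul i (da hf) (da1 i hg), pd_mul i (da hg) (da1 i hf)]
    ring
  rw [lap_eq, lap_eq, lap_eq, key, key]; ring

lemma lap_const (c : ℝ) (x : Pl) : lap (fun _ => c) x = 0 := by
  have : ∀ i, pd i (fun _ : Pl => c) = fun _ => 0 := fun i => funext fun y => pd_const i c y
  rw [lap_eq, this, this, pd_const, pd_const]; simp

lemma lap_cmul {f : Pl → ℝ} {x : Pl} (c : ℝ) (hf : ContDiffAt ℝ 2 f x) :
    lap (fun y => c * f y) x = c * lap f x := by
  rw [lap_mul contDiffAt_const hf, lap_const, pd_const, pd_const]; ring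

lemma lap_neg {f : Pl → ℝ} {x : Pl} (hf : ContDiffAt ℝ 2 f x) :
    lap (fun y => - f y) x = - lap f x := by
  have := lap_cmul (-1) hf
  simpa using this

lemma lap_sub {f g : Pl → ℝ} {x : Pl} (hf : ContDiffAt ℝ 2 f x) (hg : ContDiffAt ℝ 2 g x) :
    lap (fun y => f y - g y) x = lap f x - lap g x := by
  have := lap_add hf hg.neg
  simp only [← sub_eq_add_neg] at this
  rw [this, lap_neg hg]; ring

lemma lap_comp {f : Pl → ℝ} {φ dphi : ℝ → ℝ} {ddphi : ℝ} {x : Pl} (hf : ContDiffAt ℝ 2 f x)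
    (h1 : ∀ᶠ t in 𝓝 (f x), HasDerivAt φ (dphi t) t) (h2 : HasDerivAt dphi ddphi (f x)) :
    lap (fun y => φ (f y)) x = ddphi * ((pd 0 f x)^2 + (pd 1 f x)^2) + dphi (f x) * lap f x := by
  have key : ∀ i, pd i (pd i (fun y => φ (f y))) x =
      ddphi * (pd i f x)^2 + dphi (f x) * pd i (pd i f) x := by
    intro i
    have : pd i (pd i (fun y => φ (f y))) x = pd i (fun y => dphi (f y) * pd i f y) x := by
      apply pd_congr
      filter_upwards [cd_ev (n := 2) hf, hf.continuousAt.eventually h1] with y h1 h2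
      exact pd_comp i (da h1) h2
    rw [this, pd_mul i _ (da1 i hf), pd_comp i (da hf) h2]
    · ring
    · exact h2.differentiableAt.comp x (da hf)
  rw [lap_eq, lap_eq, key, key]; ring

/-- Laplacian of a partial derivative. -/
lemma lap_pd {f : Pl → ℝ} {x : Pl} (j : Fin 2) (hf : ContDiffAt ℝ 3 f x) :
    lap (pd j f) x = pd j (lap f) x := by
  have key : ∀ i, pd i (pd i (pd j f)) x = pd j (pd i (pd i f)) x := by
    intro i
    have h1 : pd i (pd i (pd j f)) x = pd i (pd j (pd i f)) x := by
      apply pd_congr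
      filter_upwards [cd_ev (n := 3) hf] with y hy
      exact pd_comm i j (hy.of_le (by norm_num))
    rw [h1, pd_comm i j (cd_pd i hf (by norm_num))]
  have hl : lap f = fun y => pd 0 (pd 0 f) y + pd 1 (pd 1 f) y := funext fun y => lap_eq f y
  have hd : ∀ i, DifferentiableAt ℝ (pd i (pd i f)) x := fun i =>
    da1 i (cd_pd i hf (by norm_num))
  rw [lap_eq, key, key, hl, pd_add j (hd 0) (hd 1)]

/-- line derivative -/
lemma line_deriv {f : Pl → ℝ} {x : Pl} (i : Fin 2) (t : ℝ)
    (hf : DifferentiableAt ℝ f (x + t • EuclideanSpace.single i 1)) :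
    HasDerivAt (fun s : ℝ => f (x + s • EuclideanSpace.single i 1))
      (pd i f (x + t • EuclideanSpace.single i 1)) t := by
  have h1 : HasDerivAt (fun s : ℝ => x + s • (EuclideanSpace.single i 1 : Pl))
      (EuclideanSpace.single i 1) t := by
    simpa using ((hasDerivAt_id t).smul_const (EuclideanSpace.single i 1 : Pl)).const_add x
  exact hf.hasFDerivAt.comp_hasDerivAt t h1

/-- second derivative test -/
lemma lap_nonpos_of_max {f : Pl → ℝ} {x : Pl} (hf : ContDiffAt ℝ 2 f x)
    (hm : IsLocalMax f x) : lap f x ≤ 0 := by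
  have key : ∀ i, pd i (pd i f) x ≤ 0 := by
    intro i
    by_contra! hc
    set e : Pl := EuclideanSpace.single i 1
    set g : ℝ → ℝ := fun s => f (x + s • e)
    have hx : x + (0:ℝ) • e = x := by simp
    have hcont : Tendsto (fun s : ℝ => x + s • e) (𝓝 0) (𝓝 x) := by
      have : Continuous (fun s : ℝ => x + s • e) := by fun_prop
      have := this.tendsto 0
      rwa [hx] at this
    have hev : ∀ᶠ s in 𝓝 (0:ℝ), deriv g s = pd i f (x + s • e) := by
      filter_upwards [hcont.eventually (cd_ev (n := 2) hf)] with s hs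
      exact (line_deriv i s (da hs)).deriv
    have hd2 : deriv (deriv g) 0 = pd i (pd i f) x := by
      rw [Filter.EventuallyEq.deriv_eq hev]
      have := line_deriv (f := pd i f) (x := x) i 0 (by rw [hx]; exact da1 i hf)
      rw [this.deriv, hx]
    have hgc : ContinuousAt g 0 := by
      have : DifferentiableAt ℝ g 0 :=
        (line_deriv i 0 (by rw [hx]; exact da hf)).differentiableAt
      exact this.continuousAt
    have hgm : IsLocalMax g 0 := by
      have := hcont.eventually hm
      filter_upwards [this] with s hs
      simpa [g, hx] using hs
    have hd1 : deriv g 0 = 0 := hgm.deriv_eq_zero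
    have hmin : IsLocalMin g 0 := isLocalMin_of_deriv_deriv_pos (by rw [hd2]; exact hc) hd1 hgc
    have hcst : g =ᶠ[𝓝 0] fun _ => g 0 := by
      filter_upwards [hgm, hmin] with s h1 h2
      exact le_antisymm h1 h2
    have h0 : deriv (deriv g) 0 = 0 := by
      rw [hcst.deriv.deriv_eq]; simp
    rw [hd2] at h0; linarith
  rw [lap_eq]; linarith [key 0, key 1]

/-- comparison principle on compact sets -/
lemma comparison {K D : Set Pl} {ψ : Pl → ℝ} (hK : IsCompact K) (hc : ContinuousOn ψ K)
    (hD : ∀ x ∈ D, K ∈ 𝓝 x ∧ ContDiffAt ℝ 2 ψ x ∧ lap ψ x < 0)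
    (hb : ∀ x ∈ K, x ∉ D → 0 ≤ ψ x) : ∀ x ∈ K, 0 ≤ ψ x := by
  intro x hx
  obtain ⟨y, hy, hmin⟩ := hK.exists_isMinOn ⟨x, hx⟩ hc
  refine le_trans ?_ (hmin hx)
  by_cases hyD : y ∈ D
  · obtain ⟨h1, h2, h3⟩ := hD y hyD
    have hl : IsLocalMin ψ y := hmin.isLocalMin h1
    have := lap_nonpos_of_max h2.neg hl.neg
    rw [lap_neg h2] at this
    linarith
  · exact hb y hy hyD


lemma fderiv_map_apply {T : Pl → Pl} {x : Pl} (hT : DifferentiableAt ℝ T x) (v : Pl) (j : Fin 2) :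
    (fderiv ℝ T x v) j = fderiv ℝ (fun y => T y j) x v := by
  have h := (EuclideanSpace.proj j : Pl →L[ℝ] ℝ).hasFDerivAt.comp x hT.hasFDerivAt
  have h2 : fderiv ℝ (fun y => T y j) x =
    (EuclideanSpace.proj j : Pl →L[ℝ] ℝ).comp (fderiv ℝ T x) := h.fderiv
  rw [h2]; rfl

lemma vec_eq (v : Pl) : v = v 0 • EuclideanSpace.single (0 : Fin 2) (1:ℝ)
    + v 1 • EuclideanSpace.single (1 : Fin 2) (1:ℝ) := by
  ext k; fin_cases k <;> simp

lemma pd_map {f : Pl → ℝ} {T : Pl → Pl} {x : Pl} (i : Fin 2)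
    (hf : DifferentiableAt ℝ f (T x)) (hT : DifferentiableAt ℝ T x) :
    pd i (fun y => f (T y)) x = pd 0 f (T x) * pd i (fun y => T y 0) x
      + pd 1 f (T x) * pd i (fun y => T y 1) x := by
  have h : fderiv ℝ (fun y => f (T y)) x = (fderiv ℝ f (T x)).comp (fderiv ℝ T x) :=
    (hf.hasFDerivAt.comp x hT.hasFDerivAt).fderiv
  unfold pd
  rw [h, ContinuousLinearMap.comp_apply]
  set w := fderiv ℝ T x (EuclideanSpace.single i 1) with hw
  rw [← fderiv_map_apply hT, ← fderiv_map_apply hT, ← hw]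
  conv_lhs => rw [vec_eq w]
  simp [mul_comm]

lemma cd_comp_coord {T : Pl → Pl} {x : Pl} {n : WithTop ℕ∞} (j : Fin 2) (hT : ContDiffAt ℝ n T x) :
    ContDiffAt ℝ n (fun y => T y j) x :=
  contDiffAt_euclidean.1 hT j

lemma lap_conformal {f : Pl → ℝ} {T : Pl → Pl} {x : Pl} {lam : ℝ}
    (hf : ContDiffAt ℝ 2 f (T x)) (hT : ContDiffAt ℝ 2 T x)
    (h0 : lap (fun y => T y 0) x = 0) (h1 : lap (fun y => T y 1) x = 0)
    (h01 : pd 0 (fun y => T y 0) x * pd 0 (fun y => T y 1) x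
      + pd 1 (fun y => T y 0) x * pd 1 (fun y => T y 1) x = 0)
    (h00 : (pd 0 (fun y => T y 0) x)^2 + (pd 1 (fun y => T y 0) x)^2 = lam)
    (h11 : (pd 0 (fun y => T y 1) x)^2 + (pd 1 (fun y => T y 1) x)^2 = lam) :
    lap (fun y => f (T y)) x = lam * lap f (T x) := by
  have hTd : DifferentiableAt ℝ T x := hT.differentiableAt (by norm_num)
  have key : ∀ i, pd i (pd i (fun y => f (T y))) x =
     pd 0 f (T x) * pd i (pd i (fun y => T y 0)) x + pd 1 f (T x) * pd i (pd i (fun y => T y 1)) x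
     + pd 0 (pd 0 f) (T x) * (pd i (fun y => T y 0) x)^2
     + 2 * pd 0 (pd 1 f) (T x) * (pd i (fun y => T y 0) x * pd i (fun y => T y 1) x)
     + pd 1 (pd 1 f) (T x) * (pd i (fun y => T y 1) x)^2 := by
    intro i
    have e : pd i (pd i (fun y => f (T y))) x = pd i (fun y => pd 0 f (T y) * pd i (fun y => T y 0) y
      + pd 1 f (T y) * pd i (fun y => T y 1) y) x := by
      apply pd_congr
      filter_upwards [hT.eventually (by simp), hT.continuousAt.eventually (cd_ev (n := 2) hf)]
        with y h1 h2
      exact pd_map i (da h2) (h1.differentiableAt (by norm_num))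
    have d : ∀ j, DifferentiableAt ℝ (fun y => pd j f (T y)) x := fun j =>
      (da1 j hf).comp x hTd
    have d' : ∀ j, DifferentiableAt ℝ (pd i (fun y => T y j)) x := fun j =>
      da1 i (cd_comp_coord j hT)
    rw [e, pd_add i ((d 0).fun_mul (d' 0)) ((d 1).fun_mul (d' 1)), pd_mul i (d 0) (d' 0),
      pd_mul i (d 1) (d' 1), pd_map i (da1 0 hf) hTd, pd_map i (da1 1 hf) hTd,
      pd_comm 1 0 hf]
    ring
  rw [lap_eq] at h0 h1
  rw [lap_eq, lap_eq, key, key]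
  linear_combination pd 0 f (T x) * h0 + pd 1 f (T x) * h1 + pd 0 (pd 0 f) (T x) * h00
    + pd 1 (pd 1 f) (T x) * h11 + 2 * pd 0 (pd 1 f) (T x) * h01

lemma pd_coord (i j : Fin 2) (x : Pl) : pd i (fun y => y j) x = if i = j then 1 else 0 := by
  have h : HasFDerivAt (fun y : Pl => y j)
    (EuclideanSpace.proj j : Pl →L[ℝ] ℝ) x :=
    (EuclideanSpace.proj j : Pl →L[ℝ] ℝ).hasFDerivAt
  unfold pd
  rw [h.fderiv]
  simp [eq_comm]

lemma cd_coord {n : WithTop ℕ∞} (j : Fin 2) (x : Pl) : ContDiffAt ℝ n (fun y : Pl => y j) x :=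
  contDiffAt_euclidean.1 contDiffAt_id j

lemma lap_coord (j : Fin 2) (x : Pl) : lap (fun y => y j) x = 0 := by
  have h : ∀ i, pd i (fun y => y j) = fun _ => if i = j then 1 else 0 := fun i =>
    funext fun y => pd_coord i j y
  rw [lap_eq, h, h, pd_const, pd_const]; simp

/-- affine functions -/
def aff (c p r : ℝ) (y : Pl) : ℝ := c + (p * y 0 + r * y 1)

lemma cd_aff {n : WithTop ℕ∞} (c p r : ℝ) (x : Pl) : ContDiffAt ℝ n (aff c p r) x :=
  contDiffAt_const.add ((contDiffAt_const.mul (cd_coord 0 x)).add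
    (contDiffAt_const.mul (cd_coord 1 x)))

lemma pd_aff (c p r : ℝ) (i : Fin 2) (x : Pl) : pd i (aff c p r) x = if i = 0 then p else r := by
  have d : ∀ j : Fin 2, DifferentiableAt ℝ (fun y : Pl => y j) x := fun j => da (cd_coord j x)
  have dc : ∀ c : ℝ, DifferentiableAt ℝ (fun _ : Pl => c) x := fun c => differentiableAt_const _
  unfold aff
  rw [pd_add i (dc c) (((dc p).fun_mul (d 0)).fun_add ((dc r).fun_mul (d 1))),
    pd_add i ((dc p).fun_mul (d 0)) ((dc r).fun_mul (d 1)),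
    pd_mul i (dc p) (d 0), pd_mul i (dc r) (d 1)]
  simp only [pd_const, pd_coord]
  fin_cases i <;> simp

lemma lap_aff (c p r : ℝ) (x : Pl) : lap (aff c p r) x = 0 := by
  have h : ∀ i, pd i (aff c p r) = fun _ => if i = 0 then p else r := fun i =>
    funext fun y => pd_aff c p r i y
  rw [lap_eq, h, h, pd_const, pd_const]; simp

/-- squared distance to a point -/
def nsq (c : Pl) (y : Pl) : ℝ := ‖y - c‖ ^ 2

lemma nsq_eq (c y : Pl) : nsq c y = (y 0 - c 0)^2 + (y 1 - c 1)^2 := by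
  simp [nsq, EuclideanSpace.norm_sq_eq, Fin.sum_univ_two]

lemma cd_nsq {n : WithTop ℕ∞} (c x : Pl) : ContDiffAt ℝ n (nsq c) x := by
  have : nsq c = fun y => ‖y - c‖^2 := rfl
  rw [this]
  exact (contDiffAt_id.sub contDiffAt_const).norm_sq ℝ

lemma pd_nsq (c x : Pl) (i : Fin 2) : pd i (nsq c) x = 2 * (x i - c i) := by
  have e : nsq c = fun y => aff (-c 0) 1 0 y * aff (-c 0) 1 0 y
    + aff (-c 1) 0 1 y * aff (-c 1) 0 1 y := by
    funext y; rw [nsq_eq]; simp only [aff]; ring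
  have d : ∀ c p r, DifferentiableAt ℝ (aff c p r) x := fun c p r => da (cd_aff c p r x)
  rw [e, pd_add i ((d _ _ _).fun_mul (d _ _ _)) ((d _ _ _).fun_mul (d _ _ _)),
    pd_mul i (d _ _ _) (d _ _ _), pd_mul i (d _ _ _) (d _ _ _)]
  simp only [pd_aff]
  fin_cases i <;> simp [aff] <;> ring

lemma lap_nsq (c x : Pl) : lap (nsq c) x = 4 := by
  have h0 : pd 0 (nsq c) = aff (-2 * c 0) 2 0 := by
    funext y; rw [pd_nsq]; simp only [aff]; ring
  have h1 : pd 1 (nsq c) = aff (-2 * c 1) 0 2 := by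
    funext y; rw [pd_nsq]; simp only [aff]; ring
  rw [lap_eq, h0, h1, pd_aff, pd_aff]; norm_num

lemma grad_nsq (c x : Pl) : (pd 0 (nsq c) x)^2 + (pd 1 (nsq c) x)^2 = 4 * nsq c x := by
  rw [pd_nsq, pd_nsq, nsq_eq]; ring

lemma nsq_pos {c x : Pl} (h : x ≠ c) : 0 < nsq c x := by
  have : 0 < ‖x - c‖ := norm_pos_iff.2 (sub_ne_zero.2 h)
  unfold nsq; positivity

/-- logarithm -/
lemma cd_log {n : WithTop ℕ∞} {c x : Pl} (h : x ≠ c) :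
    ContDiffAt ℝ n (fun y => Real.log (nsq c y)) x :=
  (cd_nsq c x).log (nsq_pos h).ne'

lemma lap_log {c x : Pl} (h : x ≠ c) : lap (fun y => Real.log (nsq c y)) x = 0 := by
  have hp := nsq_pos h
  have h2 : HasDerivAt (fun t : ℝ => t⁻¹) (-((nsq c x)^2)⁻¹) (nsq c x) := hasDerivAt_inv hp.ne'
  have h1 : ∀ᶠ t in 𝓝 (nsq c x), HasDerivAt Real.log t⁻¹ t := by
    filter_upwards [lt_mem_nhds hp] with t ht
    exact Real.hasDerivAt_log ht.ne'
  rw [lap_comp (φ := Real.log) (cd_nsq c x) h1 h2, lap_nsq, grad_nsq]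
  field_simp; ring

/-- powers -/
lemma cd_pow {n : WithTop ℕ∞} {c x : Pl} (p : ℝ) (h : x ≠ c) :
    ContDiffAt ℝ n (fun y => (nsq c y) ^ p) x :=
  (cd_nsq c x).rpow_const_of_ne (nsq_pos h).ne'

lemma lap_pow {c x : Pl} (p : ℝ) (h : x ≠ c) :
    lap (fun y => (nsq c y) ^ p) x = 4 * p^2 * (nsq c x)^(p-1) := by
  have hp := nsq_pos h
  have h1 : ∀ᶠ t in 𝓝 (nsq c x), HasDerivAt (fun t : ℝ => t ^ p) (p * t ^ (p-1)) t := by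
    filter_upwards [lt_mem_nhds hp] with t ht
    exact Real.hasDerivAt_rpow_const (Or.inl ht.ne')
  have h2 : HasDerivAt (fun t : ℝ => p * t ^ (p-1)) (p * ((p-1) * (nsq c x)^(p-1-1))) (nsq c x) :=
    (Real.hasDerivAt_rpow_const (Or.inl hp.ne')).const_mul p
  rw [lap_comp (φ := fun t => t ^ p) (cd_nsq c x) h1 h2, lap_nsq, grad_nsq]
  have : (nsq c x)^(p-1) = (nsq c x)^(p-1-1) * nsq c x := by
    rw [← Real.rpow_add_one hp.ne']; congr 1; ring
  rw [this]; ring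

/-- translations -/
lemma lap_trans {f : Pl → ℝ} {c x : Pl} (hf : ContDiffAt ℝ 2 f (c + x)) :
    lap (fun y => f (c + y)) x = lap f (c + x) := by
  have e0 : (fun y : Pl => (c + y) 0) = aff (c 0) 1 0 := by funext y; simp [aff]
  have e1 : (fun y : Pl => (c + y) 1) = aff (c 1) 0 1 := by funext y; simp [aff]
  have := lap_conformal (T := fun y => c + y) (lam := 1) hf (contDiffAt_const.add contDiffAt_id)
    (by rw [e0, lap_aff]) (by rw [e1, lap_aff]) (by rw [e0, e1]; simp [pd_aff])
    (by rw [e0]; simp [pd_aff]) (by rw [e1]; simp [pd_aff])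
  simpa using this

/-- reflection -/
def rfx (v y : Pl) : Pl := y - (2 * ⟪v, y⟫) • v

lemma inner_eq (v y : Pl) : ⟪v, y⟫ = v 0 * y 0 + v 1 * y 1 := by
  simp [PiLp.inner_apply, Fin.sum_univ_two, mul_comm]

lemma cd_rfx {n : WithTop ℕ∞} (v x : Pl) : ContDiffAt ℝ n (rfx v) x := by
  exact contDiffAt_id.sub ((contDiffAt_const.mul (contDiffAt_const.inner ℝ contDiffAt_id)).smul contDiffAt_const)

lemma lap_rfx {f : Pl → ℝ} {v x : Pl} (hv : ‖v‖ = 1) (hf : ContDiffAt ℝ 2 f (rfx v x)) :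
    lap (fun y => f (rfx v y)) x = lap f (rfx v x) := by
  have hv2 : v 0 ^ 2 + v 1 ^ 2 = 1 := by
    have := EuclideanSpace.norm_sq_eq v
    rw [hv, Fin.sum_univ_two] at this; simpa using this.symm
  have e0 : (fun y : Pl => (rfx v y) 0) = aff 0 (1 - 2 * v 0 * v 0) (-2 * v 0 * v 1) := by
    funext y; simp only [rfx, aff, PiLp.sub_apply, PiLp.smul_apply, smul_eq_mul]
    rw [inner_eq]; ring
  have e1 : (fun y : Pl => (rfx v y) 1) = aff 0 (-2 * v 0 * v 1) (1 - 2 * v 1 * v 1) := by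
    funext y; simp only [rfx, aff, PiLp.sub_apply, PiLp.smul_apply, smul_eq_mul]
    rw [inner_eq]; ring
  have := lap_conformal (T := rfx v) (lam := 1) hf (cd_rfx v x)
    (by rw [e0, lap_aff]) (by rw [e1, lap_aff])
    (by rw [e0, e1]; simp [pd_aff]; linear_combination (4 * v 0 * v 1) * hv2)
    (by rw [e0]; simp [pd_aff]; linear_combination (4 * v 0 ^2) * hv2)
    (by rw [e1]; simp [pd_aff]; linear_combination (4 * v 1 ^2) * hv2)
  simpa using this

lemma norm_rfx (v y : Pl) (hv : ‖v‖ = 1) : ‖rfx v y‖ = ‖y‖ := by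
  have hv2 : v 0 ^ 2 + v 1 ^ 2 = 1 := by
    have := EuclideanSpace.norm_sq_eq v
    rw [hv, Fin.sum_univ_two] at this; simpa using this.symm
  have : ‖rfx v y‖^2 = ‖y‖^2 := by
    rw [EuclideanSpace.norm_sq_eq, EuclideanSpace.norm_sq_eq, Fin.sum_univ_two, Fin.sum_univ_two]
    simp only [rfx, PiLp.sub_apply, PiLp.smul_apply, smul_eq_mul, inner_eq, Real.norm_eq_abs, sq_abs]
    linear_combination (4 * (v 0 * y 0 + v 1 * y 1)^2) * hv2
  exact (sq_eq_sq₀ (norm_nonneg _) (norm_nonneg _)).1 this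

/-- inversion -/
def kinv (y : Pl) : Pl := (nsq 0 y)⁻¹ • y

lemma cd_kinv {n : WithTop ℕ∞} {x : Pl} (hx : x ≠ 0) : ContDiffAt ℝ n kinv x :=
  ((cd_nsq 0 x).inv (nsq_pos hx).ne').smul contDiffAt_id

lemma norm_kinv (x : Pl) : ‖kinv x‖ = ‖x‖⁻¹ := by
  unfold kinv
  rw [norm_smul, nsq, sub_zero]
  by_cases h : ‖x‖ = 0
  · simp [h]
  · simp; field_simp

lemma kinv_kinv (x : Pl) : kinv (kinv x) = x := by
  by_cases h : x = 0
  · simp [h, kinv]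
  · have hp := nsq_pos h
    have : nsq 0 (kinv x) = (nsq 0 x)⁻¹ := by
      simp only [nsq, sub_zero, norm_kinv]; simp
    have h3 : kinv (kinv x) = (nsq 0 (kinv x))⁻¹ • kinv x := rfl
    rw [h3, this]
    unfold kinv
    rw [inv_inv, smul_smul, mul_inv_cancel₀ hp.ne', one_smul]

lemma lap_kinv {f : Pl → ℝ} {x : Pl} (hx : x ≠ 0) (hf : ContDiffAt ℝ 2 f (kinv x)) :
    lap (fun y => f (kinv y)) x = ((nsq 0 x)^2)⁻¹ * lap f (kinv x) := by
  have hp := nsq_pos hx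
  have hn : nsq 0 x = x 0 ^ 2 + x 1 ^ 2 := by rw [nsq_eq]; simp
  have ht : ContDiffAt ℝ 2 (fun y => (nsq 0 y)⁻¹) x := (cd_nsq 0 x).inv hp.ne'
  have e : ∀ j, (fun y : Pl => (kinv y) j) = fun y => (nsq 0 y)⁻¹ * y j := by
    intro j; funext y; simp [kinv]
  have p1 : ∀ i, pd i (fun y => (nsq 0 y)⁻¹) x = -((nsq 0 x)^2)⁻¹ * (2 * x i) := by
    intro i
    rw [pd_comp (φ := fun t => t⁻¹) i (da (cd_nsq 0 x)) (hasDerivAt_inv hp.ne'), pd_nsq]; simp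
  have p2 : ∀ i j, pd i (fun y => (kinv y) j) x =
      (nsq 0 x)⁻¹ * (if i = j then 1 else 0) + x j * (-((nsq 0 x)^2)⁻¹ * (2 * x i)) := by
    intro i j
    rw [e, pd_mul i (da ht) (da (cd_coord j x)), pd_coord, p1]
  have l1 : lap (fun y => (nsq 0 y)⁻¹) x = 4 * ((nsq 0 x)^2)⁻¹ := by
    have := lap_pow (-1) hx
    have e1 : (fun y : Pl => nsq 0 y ^ (-1:ℝ)) = fun y => (nsq 0 y)⁻¹ := by
      funext y; rw [Real.rpow_neg_one]
    rw [e1] at this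
    rw [this]
    have : nsq 0 x ^ ((-1:ℝ) - 1) = ((nsq 0 x)^2)⁻¹ := by
      rw [show (-1:ℝ) - 1 = -((2:ℕ):ℝ) by norm_num, Real.rpow_neg hp.le, Real.rpow_natCast]
    rw [this]; ring
  have l2 : ∀ j, lap (fun y => (kinv y) j) x = 0 := by
    intro j
    rw [e, lap_mul ht (cd_coord j x), lap_coord, l1, p1, p1, pd_coord, pd_coord]
    fin_cases j <;> simp <;> ring
  refine lap_conformal hf (cd_kinv hx) (l2 0) (l2 1) ?_ ?_ ?_
  all_goals
    rw [p2, p2]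
    try rw [p2, p2]
    simp
    rw [hn] at hp ⊢
    field_simp
    ring



lemma deriv_nonneg_of_right {χ : ℝ → ℝ} {c : ℝ} (h : HasDerivAt χ c 0) (h0 : χ 0 = 0)
    (hp : ∀ᶠ s in 𝓝[>] (0:ℝ), 0 ≤ χ s) : 0 ≤ c := by
  have := h.tendsto_slope_zero_right
  refine ge_of_tendsto this ?_
  filter_upwards [hp, self_mem_nhdsWithin] with s hs hs0
  have hs0 : 0 < s := hs0
  simp [h0]
  positivity

lemma single_norm (i : Fin 2) : ‖(EuclideanSpace.single i 1 : Pl)‖ = 1 := by simp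

lemma half_compact (v : Pl) (d : ℝ) : IsCompact {y : Pl | ‖y‖ ≤ d ∧ 0 ≤ ⟪v, y⟫} := by
  refine (isCompact_closedBall (0:Pl) d).of_isClosed_subset ?_ ?_
  · have h1 : IsClosed {y : Pl | ‖y‖ ≤ d} := isClosed_le (by fun_prop) (by fun_prop)
    have h2 : IsClosed {y : Pl | 0 ≤ ⟪v, y⟫} := isClosed_le (by fun_prop) (by fun_prop)
    exact h1.inter h2
  · intro y hy; simpa using hy.1

lemma half_nhds {v : Pl} {d : ℝ} {y : Pl} (hy : ‖y‖ < d) (hy2 : 0 < ⟪v, y⟫) :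
    {y : Pl | ‖y‖ ≤ d ∧ 0 ≤ ⟪v, y⟫} ∈ 𝓝 y := by
  have h1 : IsOpen {y : Pl | ‖y‖ < d} := isOpen_lt (by fun_prop) (by fun_prop)
  have h2 : IsOpen {y : Pl | 0 < ⟪v, y⟫} := isOpen_lt (by fun_prop) (by fun_prop)
  exact mem_of_superset ((h1.inter h2).mem_nhds ⟨hy, hy2⟩) (fun z hz => ⟨hz.1.le, hz.2.le⟩)

lemma norm_v2 {v : Pl} (hv : ‖v‖ = 1) : v 0 ^ 2 + v 1 ^ 2 = 1 := by
  have := EuclideanSpace.norm_sq_eq v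
  rw [hv, Fin.sum_univ_two] at this; simpa using this.symm

lemma inner_aff (v : Pl) : (fun y => ⟪v, y⟫) = aff 0 (v 0) (v 1) := by
  funext y; rw [inner_eq]; simp [aff]

/-- Laplacian of a function of one variable -/
lemma lap_inner {v x : Pl} (hv : ‖v‖ = 1) {φ dphi : ℝ → ℝ} {ddphi : ℝ}
    (h1 : ∀ᶠ t in 𝓝 ⟪v, x⟫, HasDerivAt φ (dphi t) t) (h2 : HasDerivAt dphi ddphi ⟪v, x⟫) :
    lap (fun y => φ ⟪v, y⟫) x = ddphi := by
  have e := inner_aff v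
  have := lap_comp (f := fun y => ⟪v, y⟫) (x := x) (φ := φ) (by rw [e]; exact cd_aff _ _ _ _) h1 h2
  rw [this, e, pd_aff, pd_aff, lap_aff]
  simp only [if_true, if_neg (show (1 : Fin 2) ≠ 0 by decide)]
  rw [norm_v2 hv]; ring

lemma rfx_zero (v : Pl) : rfx v 0 = 0 := by simp [rfx]

lemma rfx_of_inner_zero {v y : Pl} (h : ⟪v, y⟫ = 0) : rfx v y = y := by simp [rfx, h]

lemma cont_rfx (v : Pl) : Continuous (rfx v) := by unfold rfx; fun_prop

lemma grad_upper {f : Pl → ℝ} {x₀ : Pl} {d M F c : ℝ} (i : Fin 2) (hd : 0 < d) (hM : 0 < M)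
    (hf : ∀ y ∈ closedBall x₀ d, ContDiffAt ℝ 2 f y)
    (hfM : ∀ y ∈ closedBall x₀ d, |f y - c| ≤ M)
    (hfF : ∀ y ∈ closedBall x₀ d, |lap f y| ≤ F) :
    pd i f x₀ ≤ F * d + 3 * M / d := by
  have hF : 0 ≤ F := (abs_nonneg _).trans (hfF x₀ (mem_closedBall_self hd.le))
  set v : Pl := EuclideanSpace.single i 1 with hv
  have hv1 : ‖v‖ = 1 := single_norm i
  set K : ℝ := F + 3 * M / d^2 with hK
  have hKp : 0 < K := by positivity
  have mem : ∀ y : Pl, ‖y‖ ≤ d → x₀ + y ∈ closedBall x₀ d := by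
    intro y hy; simpa [mem_closedBall, dist_eq_norm] using hy
  have mem' : ∀ y : Pl, ‖y‖ ≤ d → x₀ + rfx v y ∈ closedBall x₀ d := by
    intro y hy; exact mem _ (by rw [norm_rfx v y hv1]; exact hy)
  set ψ : Pl → ℝ := fun y => (M/d^2 * nsq 0 y + K * (⟪v, y⟫ * (d - ⟪v, y⟫)))
    - (1/2) * (f (x₀ + y) - f (x₀ + rfx v y)) with hψ
  have c1 : ∀ y : Pl, ‖y‖ ≤ d → ContDiffAt ℝ 2 (fun y => f (x₀ + y)) y := fun y hy =>
    ContDiffAt.comp y (g := f) (f := fun y => x₀ + y) (hf _ (mem y hy))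
      (contDiffAt_const.add contDiffAt_id)
  have c2 : ∀ y : Pl, ‖y‖ ≤ d → ContDiffAt ℝ 2 (fun y => f (x₀ + rfx v y)) y := fun y hy =>
    ContDiffAt.comp y (g := f) (f := fun y => x₀ + rfx v y) (hf _ (mem' y hy))
      (contDiffAt_const.add (cd_rfx v y))
  have c3 : ∀ y : Pl, ContDiffAt ℝ 2 (fun y : Pl => ⟪v, y⟫ * (d - ⟪v, y⟫)) y := fun y => by
    have : ContDiffAt ℝ 2 (fun y : Pl => ⟪v, y⟫) y := contDiffAt_const.inner ℝ contDiffAt_id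
    exact this.mul (contDiffAt_const.sub this)
  have c4 : ∀ y : Pl, ContDiffAt ℝ 2 (fun y => M/d^2 * nsq 0 y + K * (⟪v, y⟫ * (d - ⟪v, y⟫))) y :=
    fun y => (contDiffAt_const.mul (cd_nsq 0 y)).add (contDiffAt_const.mul (c3 y))
  have c5 : ∀ y : Pl, ‖y‖ ≤ d → ContDiffAt ℝ 2 ψ y := fun y hy =>
    (c4 y).sub (contDiffAt_const.mul ((c1 y hy).sub (c2 y hy)))
  have hcompact := half_compact v d
  have hcmp : ∀ y ∈ {y : Pl | ‖y‖ ≤ d ∧ 0 ≤ ⟪v, y⟫}, 0 ≤ ψ y := by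
    apply comparison (D := {y : Pl | ‖y‖ < d ∧ 0 < ⟪v, y⟫}) hcompact
    · intro y hy; exact (c5 y hy.1).continuousAt.continuousWithinAt
    · intro y hy
      refine ⟨?_, c5 y hy.1.le, ?_⟩
      · exact half_nhds hy.1 hy.2
      · have l1 : lap (fun y => f (x₀ + y)) y = lap f (x₀ + y) := lap_trans (hf _ (mem y hy.1.le))
        have l2 : lap (fun y => f (x₀ + rfx v y)) y = lap f (x₀ + rfx v y) := by
          have hh : ContDiffAt ℝ 2 (fun y => f (x₀ + y)) (rfx v y) :=
            c1 _ (by rw [norm_rfx v y hv1]; exact hy.1.le)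
          rw [lap_rfx (f := fun y => f (x₀ + y)) hv1 hh, lap_trans (hf _ (mem' y hy.1.le))]
        have l3 : lap (fun y : Pl => ⟪v, y⟫ * (d - ⟪v, y⟫)) y = -2 := by
          refine lap_inner hv1 (φ := fun t => t * (d - t)) (dphi := fun t => d - 2 * t) ?_ ?_
          · refine Eventually.of_forall fun t => ?_
            have := (hasDerivAt_id t).mul ((hasDerivAt_id t).const_sub d)
            refine this.congr_deriv ?_
            simp; ring
          · have := ((hasDerivAt_id ⟪v, y⟫).const_mul 2).const_sub d
            simpa using this
        rw [hψ, lap_sub (c4 y) (contDiffAt_const.mul ((c1 y hy.1.le).sub (c2 y hy.1.le))),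
          lap_add (contDiffAt_const.mul (cd_nsq 0 y)) (contDiffAt_const.mul (c3 y)),
          lap_cmul _ (cd_nsq 0 y), lap_cmul _ (c3 y),
          lap_cmul _ ((c1 y hy.1.le).sub (c2 y hy.1.le)), lap_sub (c1 y hy.1.le) (c2 y hy.1.le),
          l1, l2, l3, lap_nsq]
        have a1 := abs_le.1 (hfF _ (mem y hy.1.le))
        have a2 := abs_le.1 (hfF _ (mem' y hy.1.le))
        have : 0 < M / d^2 := by positivity
        have e3 : 3 * M / d^2 = 3 * (M/d^2) := by ring
        rw [hK, e3]
        nlinarith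
    · intro y hy hyD
      have hnn : 0 ≤ M/d^2 * nsq 0 y := by unfold nsq; positivity
      have hle : ⟪v, y⟫ ≤ d := by
        have := real_inner_le_norm v y
        rw [hv1, one_mul] at this; exact this.trans hy.1
      have hK2 : 0 ≤ K * (⟪v, y⟫ * (d - ⟪v, y⟫)) :=
        mul_nonneg hKp.le (mul_nonneg hy.2 (by linarith))
      by_cases ht : ⟪v, y⟫ = 0
      · simp only [hψ, rfx_of_inner_zero ht, sub_self, mul_zero, sub_zero]
        positivity
      · have ht' : 0 < ⟪v, y⟫ := lt_of_le_of_ne hy.2 (Ne.symm ht)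
        have hyd : ‖y‖ = d := by
          by_contra hne
          exact hyD ⟨lt_of_le_of_ne hy.1 hne, ht'⟩
        have hn : M/d^2 * nsq 0 y = M := by
          simp only [nsq, sub_zero, hyd]; field_simp
        have a1 := abs_le.1 (hfM _ (mem y hy.1))
        have a2 := abs_le.1 (hfM _ (mem' y hy.1))
        simp only [hψ]
        rw [hn]
        linarith
  have hs : ∀ s : ℝ, ⟪v, s • v⟫ = s := by
    intro s; rw [inner_smul_right, real_inner_self_eq_norm_sq, hv1]; simp
  have hr : ∀ s : ℝ, rfx v (s • v) = (-s) • v := by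
    intro s; unfold rfx; rw [hs, ← sub_smul]; congr 1; ring
  have hns : ∀ s : ℝ, nsq 0 (s • v) = s^2 := by
    intro s; simp [nsq, norm_smul, hv1]
  set χ : ℝ → ℝ := fun s => ψ (s • v) with hχ
  have hχe : χ = fun s => (M/d^2 * s^2 + K * (s * (d - s)))
    - (1/2) * (f (x₀ + s • v) - f (x₀ + (-s) • v)) := by
    funext s; simp only [hχ, hψ, hs, hr, hns]
  have hx0 : x₀ + (0:ℝ) • v = x₀ := by simp
  have hf0 : DifferentiableAt ℝ f x₀ := da (hf x₀ (mem_closedBall_self hd.le))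
  have hder1 : HasDerivAt (fun s : ℝ => f (x₀ + s • v)) (pd i f x₀) 0 := by
    have := line_deriv (f := f) (x := x₀) i 0 (by rw [← hv, hx0]; exact hf0)
    rwa [← hv, hx0] at this
  have hder2 : HasDerivAt (fun s : ℝ => f (x₀ + (-s) • v)) (-pd i f x₀) 0 := by
    have h0 : HasDerivAt (fun s : ℝ => f (x₀ + s • v)) (pd i f x₀) (-0) := by simpa using hder1
    have := HasDerivAt.comp (0:ℝ) h0 (hasDerivAt_neg 0)
    simpa [Function.comp_def] using this
  have hder : HasDerivAt χ (K * d - pd i f x₀) 0 := by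
    rw [hχe]
    have hp1 : HasDerivAt (fun s : ℝ => M/d^2 * s^2) 0 0 := by
      have := ((hasDerivAt_id (0:ℝ)).pow 2).const_mul (M/d^2)
      simpa using this
    have hp2 : HasDerivAt (fun s : ℝ => K * (s * (d - s))) (K * d) 0 := by
      have := ((hasDerivAt_id (0:ℝ)).mul ((hasDerivAt_id (0:ℝ)).const_sub d)).const_mul K
      simpa using this
    have := (hp1.add hp2).sub ((hder1.sub hder2).const_mul (1/2))
    refine this.congr_deriv ?_
    ring
  have hfin : 0 ≤ K * d - pd i f x₀ := by
    refine deriv_nonneg_of_right hder ?_ ?_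
    · rw [hχe]; simp
    · have : ∀ᶠ s in 𝓝[>] (0:ℝ), s < d := nhdsWithin_le_nhds (gt_mem_nhds hd)
      filter_upwards [this, self_mem_nhdsWithin] with s h1 h2
      have h2 : 0 < s := h2
      refine hcmp _ ⟨?_, ?_⟩
      · rw [norm_smul, hv1, Real.norm_eq_abs, abs_of_pos h2]; linarith
      · rw [hs]; exact h2.le
  have : K * d = F * d + 3 * M / d := by rw [hK]; field_simp
  linarith

/-- Interior gradient estimate. -/
lemma grad_est {f : Pl → ℝ} {x₀ : Pl} {d M F c : ℝ} (i : Fin 2) (hd : 0 < d) (hM : 0 < M)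
    (hf : ∀ y ∈ closedBall x₀ d, ContDiffAt ℝ 2 f y)
    (hfM : ∀ y ∈ closedBall x₀ d, |f y - c| ≤ M)
    (hfF : ∀ y ∈ closedBall x₀ d, |lap f y| ≤ F) :
    |pd i f x₀| ≤ F * d + 3 * M / d := by
  have h1 := grad_upper i hd hM hf hfM hfF
  have h2 := grad_upper (f := fun y => - f y) (c := -c) i hd hM (fun y hy => (hf y hy).neg)
    (fun y hy => by rw [show -f y - -c = -(f y - c) by ring, abs_neg]; exact hfM y hy)
    (fun y hy => by rw [lap_neg (hf y hy), abs_neg]; exact hfF y hy)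
  have h3 : pd i (fun y => - f y) x₀ = - pd i f x₀ := by simp [pd]
  rw [h3] at h2
  exact abs_le.2 ⟨by linarith, h1⟩



lemma cd_sum_log {N : ℕ} (q : Fin N → Pl) (ε C : ℝ) {y : Pl} (hy : y ∉ Set.range q) :
    ContDiffAt ℝ 2 (fun y => ε * ∑ j, (C - Real.log (nsq (q j) y))) y ∧
    lap (fun y => ε * ∑ j, (C - Real.log (nsq (q j) y))) y = 0 := by
  have hne : ∀ j, y ≠ q j := fun j h => hy ⟨j, h.symm⟩
  have key : ∀ s : Finset (Fin N),
      ContDiffAt ℝ 2 (fun y => ∑ j ∈ s, (C - Real.log (nsq (q j) y))) y ∧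
      lap (fun y => ∑ j ∈ s, (C - Real.log (nsq (q j) y))) y = 0 := by
    intro s
    induction s using Finset.induction_on with
    | empty => simpa using ⟨contDiffAt_const, lap_const 0 y⟩
    | insert a s ha ih =>
      simp only [Finset.sum_insert ha]
      have h1 : ContDiffAt ℝ 2 (fun y => C - Real.log (nsq (q a) y)) y :=
        contDiffAt_const.sub (cd_log (hne a))
      refine ⟨h1.add ih.1, ?_⟩
      rw [lap_add h1 ih.1, ih.2, lap_sub contDiffAt_const (cd_log (hne a)), lap_const,
        lap_log (hne a)]
      simp
  exact ⟨contDiffAt_const.mul (key _).1, by rw [lap_cmul _ (key _).1, (key _).2, mul_zero]⟩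

/-- comparison principle with removable points -/
lemma comparison_rem {K D : Set Pl} {ψ : Pl → ℝ} {N : ℕ} (q : Fin N → Pl) (m : ℝ)
    (hK : IsCompact K) (hc : ContinuousOn ψ (K \ Set.range q))
    (hD : ∀ x ∈ D, K ∈ 𝓝 x ∧ ContDiffAt ℝ 2 ψ x ∧ lap ψ x < 0)
    (hm : ∀ x ∈ K, x ∉ Set.range q → -m ≤ ψ x)
    (hb : ∀ x ∈ K, x ∉ Set.range q → x ∉ D → 0 ≤ ψ x) :
    ∀ x ∈ K, x ∉ Set.range q → 0 ≤ ψ x := by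
  intro x hx hxq
  obtain ⟨C, hC⟩ : ∃ C : ℝ, ∀ y ∈ K, ∀ j, Real.log (nsq (q j) y) ≤ C := by
    have : ∀ j, ∃ C : ℝ, ∀ y ∈ K, Real.log (nsq (q j) y) ≤ C := by
      intro j
      obtain ⟨B, hB⟩ := hK.bddAbove_image (f := nsq (q j))
        (fun y _ => (cd_nsq (n := 0) (q j) y).continuousAt.continuousWithinAt)
      refine ⟨max B 1, fun y hy => ?_⟩
      have h1 : nsq (q j) y ≤ B := hB ⟨y, hy, rfl⟩
      by_cases h0 : nsq (q j) y = 0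
      · rw [h0, Real.log_zero]; positivity
      · have hp : 0 < nsq (q j) y := lt_of_le_of_ne (by unfold nsq; positivity) (Ne.symm h0)
        have := Real.log_le_sub_one_of_pos hp
        exact le_max_of_le_left (by linarith)
    choose C hC using this
    refine ⟨∑ j, |C j|, fun y hy j => (hC j y hy).trans ((le_abs_self _).trans ?_)⟩
    exact Finset.single_le_sum (f := fun j => |C j|) (fun j _ => abs_nonneg _) (Finset.mem_univ j)
  have hxq' : ∀ j, x ≠ q j := fun j h => hxq ⟨j, h.symm⟩
  have main : ∀ ε : ℝ, 0 < ε → 0 ≤ ψ x + ε * ∑ j, (C - Real.log (nsq (q j) x)) := by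
    intro ε hε
    set g : Pl → ℝ := fun y => ε * ∑ j, (C - Real.log (nsq (q j) y)) with hg
    obtain ⟨η, hη0, hη1, hη2⟩ : ∃ η : ℝ, 0 < η ∧ η < Real.exp ((C - m/ε)/2) ∧
        ∀ j, η < ‖x - q j‖ := by
      have h1 : ∀ᶠ η in 𝓝[>] (0:ℝ), η < Real.exp ((C - m/ε)/2) :=
        nhdsWithin_le_nhds (gt_mem_nhds (Real.exp_pos _))
      have h2 : ∀ᶠ η in 𝓝[>] (0:ℝ), ∀ j, η < ‖x - q j‖ := by
        rw [eventually_all]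
        intro j
        exact nhdsWithin_le_nhds (gt_mem_nhds (norm_pos_iff.2 (sub_ne_zero.2 (hxq' j))))
      obtain ⟨η, h⟩ := ((h1.and h2).and self_mem_nhdsWithin).exists
      exact ⟨η, h.2, h.1.1, h.1.2⟩
    have hnear : ∀ y ∈ K, y ∉ Set.range q → ∀ j, ‖y - q j‖ ≤ η → 0 ≤ ψ y + g y := by
      intro y hy hyq j hj
      have hne : y ≠ q j := fun h => hyq ⟨j, h.symm⟩
      have hp := nsq_pos hne
      have hl : Real.log (nsq (q j) y) ≤ C - m/ε := by
        rw [Real.log_le_iff_le_exp hp]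
        have : Real.exp (C - m/ε) = Real.exp ((C - m/ε)/2) ^ 2 := by
          rw [← Real.exp_nat_mul]; congr 1; push_cast; ring
        rw [this]; unfold nsq
        exact pow_le_pow_left₀ (norm_nonneg _) (hj.trans hη1.le) 2
      have hs : C - Real.log (nsq (q j) y) ≤ ∑ j, (C - Real.log (nsq (q j) y)) :=
        Finset.single_le_sum (f := fun j => C - Real.log (nsq (q j) y))
          (fun i _ => sub_nonneg.2 (hC y hy i)) (Finset.mem_univ j)
      have : m ≤ g y := by
        have h3 : m / ε ≤ ∑ j, (C - Real.log (nsq (q j) y)) := by linarith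
        rw [div_le_iff₀ hε] at h3
        rw [hg]; linarith
      linarith [hm y hy hyq]
    have hgn : ∀ y ∈ K, 0 ≤ g y := fun y hy =>
      mul_nonneg hε.le (Finset.sum_nonneg fun j _ => sub_nonneg.2 (hC y hy j))
    set K' : Set Pl := K ∩ ⋂ j, {y | η ≤ ‖y - q j‖} with hK'
    have hclosed : IsClosed (⋂ j, {y : Pl | η ≤ ‖y - q j‖}) :=
      isClosed_iInter fun j => isClosed_le (by fun_prop) (by fun_prop)
    have hK'q : ∀ y ∈ K', y ∉ Set.range q := by
      rintro y ⟨_, hy⟩ ⟨j, rfl⟩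
      have := Set.mem_iInter.1 hy j
      simp at this; linarith
    have hxK' : x ∈ K' := ⟨hx, Set.mem_iInter.2 fun j => (hη2 j).le⟩
    refine comparison (K := K') (ψ := fun y => ψ y + g y)
      (D := (D ∩ ⋂ j, {y | η < ‖y - q j‖}) ∩ K') (hK.inter_right hclosed) ?_ ?_ ?_ x hxK'
    · refine ContinuousOn.add (hc.mono fun y hy => ⟨hy.1, hK'q y hy⟩) ?_
      intro y hy
      exact (cd_sum_log q ε C (hK'q y hy)).1.continuousAt.continuousWithinAt
    · rintro y ⟨⟨hyD, hyη⟩, hyK⟩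
      obtain ⟨h1, h2, h3⟩ := hD y hyD
      have h4 := cd_sum_log q ε C (hK'q y hyK)
      refine ⟨inter_mem h1 ?_, h2.add h4.1, ?_⟩
      · have ho : IsOpen (⋂ j, {y : Pl | η < ‖y - q j‖}) :=
          isOpen_iInter_of_finite fun j => isOpen_lt (by fun_prop) (by fun_prop)
        refine mem_of_superset (ho.mem_nhds hyη) ?_
        intro z hz
        refine Set.mem_iInter.2 fun j => ?_
        have h5 : η < ‖z - q j‖ := Set.mem_iInter.1 hz j
        exact h5.le
      · rw [lap_add h2 h4.1, h4.2]; linarith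
    · intro y hy hyD
      by_cases h : ∃ j, ‖y - q j‖ ≤ η
      · obtain ⟨j, hj⟩ := h
        exact hnear y hy.1 (hK'q y hy) j hj
      · push Not at h
        have : y ∉ D := fun hh => hyD ⟨⟨hh, Set.mem_iInter.2 h⟩, hy⟩
        exact add_nonneg (hb y hy.1 (hK'q y hy) this) (hgn y hy.1)
  have hlim : Tendsto (fun ε : ℝ => ψ x + ε * ∑ j, (C - Real.log (nsq (q j) x))) (𝓝[>] 0)
      (𝓝 (ψ x)) := by
    have : Continuous (fun ε : ℝ => ψ x + ε * ∑ j, (C - Real.log (nsq (q j) x))) := by fun_prop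
    have := this.tendsto 0
    simp only [zero_mul, add_zero] at this
    exact this.mono_left nhdsWithin_le_nhds
  exact ge_of_tendsto hlim (by filter_upwards [self_mem_nhdsWithin] with ε hε; exact main ε hε)

lemma beta_c {α : ℝ} (h1 : -1 < α) (h2 : α ≤ 0) : ∃ c : ℝ, 0 < c ∧ ∀ t r : ℝ, 0 < t → t ≤ r →
    r ≤ 1 → 2 * ((1+α) * (α * t^(α-1))) - 2 ≤ - c * r^(2*α) := by
  rcases h2.lt_or_eq with h2 | h2
  · refine ⟨-2 * (1+α) * α, by nlinarith, fun t r ht htr hr => ?_⟩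
    have hr0 : 0 < r := ht.trans_le htr
    have a1 : r^(α-1) ≤ t^(α-1) := Real.rpow_le_rpow_of_nonpos ht htr (by linarith)
    have a2 : r^(2*α) ≤ r^(α-1) := Real.rpow_le_rpow_of_exponent_ge hr0 hr (by linarith)
    have : 0 ≤ (-((1+α) * α)) * (t^(α-1) - r^(2*α)) := mul_nonneg (by nlinarith) (by linarith)
    nlinarith
  · refine ⟨2, by norm_num, fun t r ht htr hr => ?_⟩
    subst h2; simp

lemma lip_sphere {f : Pl → ℝ} {R : ℝ} (hf : ∀ x, ‖x‖ = R → ContDiffAt ℝ 2 f x) :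
    ∃ Λ : ℝ, 0 ≤ Λ ∧ ∀ x y, ‖x‖ = R → ‖y‖ = R → |f x - f y| ≤ Λ * ‖x - y‖ := by
  have hl : LocallyLipschitzOn (sphere (0:Pl) R) f := by
    intro x hx
    obtain ⟨K, t, ht, hK⟩ := ((hf x (by simpa using hx)).of_le (m := 1) (by norm_num)).exists_lipschitzOnWith
    exact ⟨K, t, mem_nhdsWithin_of_mem_nhds ht, hK⟩
  obtain ⟨K, hK⟩ := hl.exists_lipschitzOnWith_of_compact (isCompact_sphere (0:Pl) R)
  refine ⟨K, K.2, fun x y hx hy => ?_⟩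
  have := hK.dist_le_mul x (by simpa using hx) y (by simpa using hy)
  rwa [Real.dist_eq, dist_eq_norm] at this

lemma rfx_bound {f : Pl → ℝ} {R α C : ℝ} (hR : 0 < R) (hR1 : R ≤ 1) (hα : -1 < α) (hα0 : α ≤ 0)
    (hC : 0 ≤ C) (h0 : ContinuousAt f 0)
    (hf : ∀ x, x ≠ 0 → ‖x‖ ≤ R → ContDiffAt ℝ 2 f x)
    (hL : ∀ x, x ≠ 0 → ‖x‖ ≤ R → |lap f x| ≤ C * ‖x‖^(2*α)) :
    ∃ A : ℝ, 0 ≤ A ∧ ∀ v : Pl, ‖v‖ = 1 → ∀ x, ‖x‖ ≤ R → 0 ≤ ⟪v, x⟫ →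
      f x - f (rfx v x) ≤ A * ‖x‖^(1+α) := by
  obtain ⟨c, hc0, hc⟩ := beta_c hα hα0
  obtain ⟨Λ, hΛ0, hΛ⟩ := lip_sphere (f := f) (R := R)
    (fun x hx => hf x (by rintro rfl; simp at hx; linarith) hx.le)
  have hs : 0 < 1 + α := by linarith
  set B : ℝ := 2 * Λ + (2 * C + 1) / c with hB
  have hB0 : 0 ≤ B := by positivity
  refine ⟨B * 2, by positivity, fun v hv x hx hxv => ?_⟩
  set β : ℝ → ℝ := fun t => 2 * t^(1+α) - t^2 with hβ
  have hβc : Continuous β := by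
    have : Continuous (fun t : ℝ => t^(1+α)) :=
      continuous_id.rpow_const (fun t => Or.inr hs.le)
    fun_prop
  have hβt : ∀ t, 0 ≤ t → t ≤ 1 → t ≤ β t := by
    intro t ht ht1
    have h1 : t ≤ t^(1+α) := by
      rcases ht.eq_or_lt with rfl | ht
      · exact Real.rpow_nonneg le_rfl _
      · have := Real.rpow_le_rpow_of_exponent_ge ht ht1 (show 1 + α ≤ 1 by linarith)
        simpa using this
    have h2 : t^2 ≤ t := by nlinarith
    simp only [hβ]; linarith
  have hle : ∀ y : Pl, ⟪v, y⟫ ≤ ‖y‖ := fun y => by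
    have := real_inner_le_norm v y
    rwa [hv, one_mul] at this
  set ψ : Pl → ℝ := fun y => B * β ⟪v, y⟫ - (f y - f (rfx v y)) with hψ
  have hrne : ∀ y : Pl, y ≠ 0 → rfx v y ≠ 0 := by
    intro y hy h
    have := norm_rfx v y hv
    rw [h, norm_zero] at this
    exact hy (norm_eq_zero.1 this.symm)
  have c1 : ∀ y : Pl, y ≠ 0 → ‖y‖ ≤ R → ContDiffAt ℝ 2 (fun y => f (rfx v y)) y := fun y hy hy2 =>
    ContDiffAt.comp y (g := f) (f := rfx v)
      (hf _ (hrne y hy) (by rw [norm_rfx v y hv]; exact hy2)) (cd_rfx v y)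
  have hfc : ∀ y : Pl, ‖y‖ ≤ R → ContinuousAt f y := by
    intro y hy
    by_cases h : y = 0
    · rw [h]; exact h0
    · exact (hf y h hy).continuousAt
  have hcmp : ∀ y ∈ {y : Pl | ‖y‖ ≤ R ∧ 0 ≤ ⟪v, y⟫}, 0 ≤ ψ y := by
    apply comparison (D := {y : Pl | ‖y‖ < R ∧ 0 < ⟪v, y⟫}) (half_compact v R)
    · intro y hy
      have a1 : ContinuousAt (fun y : Pl => B * β ⟪v, y⟫) y := by
        have : Continuous (fun y : Pl => B * β ⟪v, y⟫) := by fun_prop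
        exact this.continuousAt
      have a2 : ContinuousAt (fun y => f (rfx v y)) y :=
        ContinuousAt.comp (g := f) (f := rfx v)
          (hfc _ (by rw [norm_rfx v y hv]; exact hy.1)) (cont_rfx v).continuousAt
      exact (a1.sub ((hfc y hy.1).sub a2)).continuousWithinAt
    · intro y hy
      have hyne : y ≠ 0 := by rintro rfl; simp at hy
      have hi : ContDiffAt ℝ 2 (fun y : Pl => ⟪v, y⟫) y := contDiffAt_const.inner ℝ contDiffAt_id
      have hb : ContDiffAt ℝ 2 (fun y : Pl => β ⟪v, y⟫) y := by
        simp only [hβ]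
        exact (contDiffAt_const.mul (hi.rpow_const_of_ne hy.2.ne')).sub (hi.pow 2)
      have hf1 := hf y hyne hy.1.le
      have hf2 := c1 y hyne hy.1.le
      refine ⟨half_nhds hy.1 hy.2, (contDiffAt_const.mul hb).sub (hf1.sub hf2), ?_⟩
      have l1 : lap (fun y : Pl => β ⟪v, y⟫) y = 2 * ((1+α) * (α * ⟪v, y⟫^(α-1))) - 2 := by
        refine lap_inner hv (dphi := fun t => 2 * ((1+α) * t^α) - 2 * t) ?_ ?_
        · filter_upwards [lt_mem_nhds hy.2] with t ht
          have e1 := (Real.hasDerivAt_rpow_const (x := t) (p := 1 + α) (Or.inl ht.ne')).const_mul 2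
          have e2 := (hasDerivAt_id t).pow 2
          refine (e1.sub e2).congr_deriv ?_
          simp
        · have e1 := ((Real.hasDerivAt_rpow_const (x := ⟪v, y⟫) (p := α)
            (Or.inl hy.2.ne')).const_mul (1+α)).const_mul 2
          have e2 := (hasDerivAt_id ⟪v, y⟫).const_mul 2
          refine (e1.sub e2).congr_deriv ?_
          simp
      rw [hψ, lap_sub (contDiffAt_const.mul hb) (hf1.sub hf2), lap_cmul _ hb, lap_sub hf1 hf2, l1,
        lap_rfx hv (hf _ (hrne y hyne) (by rw [norm_rfx v y hv]; exact hy.1.le))]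
      have a1 := abs_le.1 (hL y hyne hy.1.le)
      have a2 := abs_le.1 (hL _ (hrne y hyne) (by rw [norm_rfx v y hv]; exact hy.1.le))
      rw [norm_rfx v y hv] at a2
      have a3 := hc ⟪v, y⟫ ‖y‖ hy.2 (hle y) (hy.1.le.trans hR1)
      have hpos : 0 < ‖y‖^(2*α) := Real.rpow_pos_of_pos (norm_pos_iff.2 hyne) _
      have a4 : B * (2 * ((1+α) * (α * ⟪v, y⟫^(α-1))) - 2) ≤ B * (- c * ‖y‖^(2*α)) :=
        mul_le_mul_of_nonneg_left a3 hB0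
      have a5 : 2 * C + 1 ≤ B * c := by
        rw [hB, add_mul, div_mul_cancel₀ _ hc0.ne']
        have : 0 ≤ 2 * Λ * c := by positivity
        linarith
      have a6 := mul_le_mul_of_nonneg_right a5 hpos.le
      nlinarith
    · intro y hy hyD
      by_cases ht : ⟪v, y⟫ = 0
      · simp only [hψ, hβ, rfx_of_inner_zero ht, ht, Real.zero_rpow hs.ne']; simp
      · have ht' : 0 < ⟪v, y⟫ := lt_of_le_of_ne hy.2 (Ne.symm ht)
        have hyd : ‖y‖ = R := by
          by_contra hne
          exact hyD ⟨lt_of_le_of_ne hy.1 hne, ht'⟩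
        have h1 := hΛ y (rfx v y) hyd (by rw [norm_rfx v y hv, hyd])
        have h2 : ‖y - rfx v y‖ = 2 * ⟪v, y⟫ := by
          simp only [rfx, sub_sub_cancel, norm_smul, hv, mul_one, Real.norm_eq_abs]
          exact abs_of_pos (by positivity)
        rw [h2] at h1
        have h3 := (abs_le.1 h1).2
        have h4 := hβt ⟪v, y⟫ ht'.le ((hle y).trans (hy.1.trans hR1))
        have h5 : 2 * Λ * ⟪v, y⟫ ≤ B * ⟪v, y⟫ := by
          refine mul_le_mul_of_nonneg_right ?_ ht'.le
          rw [hB]; have : 0 ≤ (2 * C + 1)/c := by positivity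
          linarith
        have h6 := mul_le_mul_of_nonneg_left h4 hB0
        simp only [hψ]
        linarith
  have hfin := hcmp x ⟨hx, hxv⟩
  simp only [hψ] at hfin
  have h7 : ⟪v, x⟫^(1+α) ≤ ‖x‖^(1+α) := Real.rpow_le_rpow hxv (hle x) hs.le
  have h8 : β ⟪v, x⟫ ≤ 2 * ‖x‖^(1+α) := by
    simp only [hβ]; nlinarith [sq_nonneg ⟪v, x⟫]
  have := mul_le_mul_of_nonneg_left h8 hB0
  linarith

lemma osc_bound {f : Pl → ℝ} {R A s : ℝ}
    (h : ∀ v : Pl, ‖v‖ = 1 → ∀ x, ‖x‖ ≤ R → 0 ≤ ⟪v, x⟫ → f x - f (rfx v x) ≤ A * ‖x‖^s)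
    (hA : 0 ≤ A) {x y : Pl} (hx : ‖x‖ ≤ R) (hxy : ‖x‖ = ‖y‖) : f x - f y ≤ A * ‖x‖^s := by
  by_cases hne : x = y
  · rw [hne, sub_self]; positivity
  have hn : 0 < ‖x - y‖ := norm_pos_iff.2 (sub_ne_zero.2 hne)
  set v : Pl := ‖x - y‖⁻¹ • (x - y) with hv
  have hv1 : ‖v‖ = 1 := by rw [hv, norm_smul, norm_inv, norm_norm]; field_simp
  have hin : ⟪x - y, x⟫ = ‖x - y‖^2 / 2 := by
    rw [norm_sub_sq_real, inner_sub_left, real_inner_self_eq_norm_sq, hxy, real_inner_comm]; ring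
  have hvx : ⟪v, x⟫ = ‖x - y‖ / 2 := by
    rw [hv, real_inner_smul_left, hin]; field_simp
  have hr : rfx v x = y := by
    unfold rfx
    rw [hvx, hv, smul_smul]
    have : 2 * (‖x - y‖ / 2) * ‖x - y‖⁻¹ = 1 := by field_simp
    rw [this, one_smul]; abel
  have := h v hv1 x hx (by rw [hvx]; positivity)
  rwa [hr] at this

lemma center_upper {f : Pl → ℝ} {R α C A : ℝ} (hα : -1 < α) (hα0 : α ≤ 0) (hR1 : R ≤ 1)
    (hC : 0 ≤ C) (h0 : ContinuousAt f 0)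
    (hf : ∀ x, x ≠ 0 → ‖x‖ ≤ R → ContDiffAt ℝ 2 f x)
    (hL : ∀ x, x ≠ 0 → ‖x‖ ≤ R → |lap f x| ≤ C * ‖x‖^(2*α))
    (hA : 0 ≤ A)
    (ho : ∀ x y, ‖x‖ ≤ R → ‖x‖ = ‖y‖ → f x - f y ≤ A * ‖x‖^(1+α)) {x : Pl} (hx : x ≠ 0)
    (hxR : ‖x‖ ≤ R) :
    f 0 - f x ≤ (A + (C+1)/(4 * (1+α)^2)) * ‖x‖^(1+α) := by
  have hs : 0 < 1 + α := by linarith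
  set r := ‖x‖ with hr
  have hr0 : 0 < r := norm_pos_iff.2 hx
  set c' : ℝ := (C+1)/(4 * (1+α)^2) with hc'
  have hc'0 : 0 ≤ c' := by positivity
  have hc'e : c' * (4 * (1+α)^2) = C + 1 := by rw [hc']; field_simp
  set ψ : Pl → ℝ := fun y => (f x + (A + c') * r^(1+α)) - (f y + c' * nsq 0 y ^ (1+α)) with hψ
  have hfc : ∀ y : Pl, ‖y‖ ≤ R → ContinuousAt f y := by
    intro y hy
    by_cases h : y = 0
    · rw [h]; exact h0
    · exact (hf y h hy).continuousAt
  have hψc : ∀ y : Pl, ‖y‖ ≤ R → ContinuousAt ψ y := by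
    intro y hy
    have : Continuous (fun y : Pl => c' * nsq 0 y ^ (1+α)) := by
      have h1 : Continuous (nsq 0) := by unfold nsq; fun_prop
      exact continuous_const.mul (h1.rpow_const (fun t => Or.inr hs.le))
    exact continuousAt_const.sub ((hfc y hy).add this.continuousAt)
  have hco : ContinuousOn ψ (closedBall (0:Pl) r) := fun y hy =>
    (hψc y ((by simpa using hy : ‖y‖ ≤ r).trans hxR)).continuousWithinAt
  obtain ⟨m, hm⟩ := (isCompact_closedBall (0:Pl) r).bddBelow_image hco
  have hrange : Set.range (fun _ : Fin 1 => (0:Pl)) = {0} := by simp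
  have key := comparison_rem (K := closedBall (0:Pl) r) (D := {y | y ≠ 0 ∧ ‖y‖ < r}) (ψ := ψ)
    (fun _ : Fin 1 => (0:Pl)) (-m) (isCompact_closedBall _ _) (hco.mono Set.sdiff_subset)
    (by
      rintro y ⟨hy0, hyr⟩
      have hyR := hyr.le.trans hxR
      have c1 := hf y hy0 hyR
      have c2 : ContDiffAt ℝ 2 (fun y => nsq 0 y ^ (1+α)) y := cd_pow _ hy0
      refine ⟨closedBall_mem_nhds_of_mem (by simpa using hyr),
        contDiffAt_const.sub (c1.add (contDiffAt_const.mul c2)), ?_⟩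
      rw [hψ, lap_sub contDiffAt_const (c1.add (contDiffAt_const.mul c2)), lap_const,
        lap_add c1 (contDiffAt_const.mul c2), lap_cmul _ c2, lap_pow _ hy0]
      have a1 := abs_le.1 (hL y hy0 hyR)
      have e : nsq 0 y ^ (1 + α - 1) = ‖y‖^(2*α) := by
        simp only [nsq, sub_zero]
        rw [← Real.rpow_natCast, ← Real.rpow_mul (norm_nonneg _)]; congr 1; push_cast; ring
      have hpos : 0 < ‖y‖^(2*α) := Real.rpow_pos_of_pos (norm_pos_iff.2 hy0) _
      rw [e]
      have : c' * (4 * (1+α)^2 * ‖y‖^(2*α)) = (C+1) * ‖y‖^(2*α) := by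
        rw [← mul_assoc, hc'e]
      rw [this]; nlinarith)
    (by intro y hy _; simpa using hm ⟨y, hy, rfl⟩)
    (by
      intro y hy hyq hyD
      rw [hrange] at hyq
      have hyr : ‖y‖ = r := by
        have h1 : ‖y‖ ≤ r := by simpa using hy
        by_contra hne
        exact hyD ⟨hyq, lt_of_le_of_ne h1 hne⟩
      have h1 := ho y x (hyr.le.trans hxR) (by rw [hyr])
      rw [hyr] at h1
      have h2 : nsq 0 y ^ (1+α) ≤ r^(1+α) := by
        refine Real.rpow_le_rpow (by unfold nsq; positivity) ?_ hs.le
        simp only [nsq, sub_zero, hyr]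
        nlinarith [hxR.trans hR1]
      have h3 := mul_le_mul_of_nonneg_left h2 hc'0
      simp only [hψ]; linarith)
  have h0' : 0 ≤ ψ 0 := by
    have hcl : Tendsto ψ (𝓝[≠] 0) (𝓝 (ψ 0)) :=
      (hψc 0 (by simpa using hr0.le.trans hxR)).tendsto.mono_left nhdsWithin_le_nhds
    refine ge_of_tendsto hcl ?_
    have : ∀ᶠ y in 𝓝[≠] (0:Pl), y ∈ closedBall (0:Pl) r :=
      nhdsWithin_le_nhds (closedBall_mem_nhds _ hr0)
    filter_upwards [this, self_mem_nhdsWithin] with y h1 h2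
    exact key y h1 (by rw [hrange]; exact h2)
  have : nsq 0 (0:Pl) ^ (1+α) = 0 := by
    simp [nsq, Real.zero_rpow hs.ne']
  simp only [hψ, this] at h0'
  linarith

/-- Hölder estimate in a punctured disc. -/
lemma punctured {f : Pl → ℝ} {R α C L : ℝ} (hR : 0 < R) (hR1 : R ≤ 1) (hα : -1 < α) (hα0 : α ≤ 0)
    (hC : 0 ≤ C) (h0 : Tendsto f (𝓝[≠] 0) (𝓝 L))
    (hf : ∀ x, x ≠ 0 → ‖x‖ ≤ R → ContDiffAt ℝ 2 f x)
    (hL : ∀ x, x ≠ 0 → ‖x‖ ≤ R → |lap f x| ≤ C * ‖x‖^(2*α)) :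
    ∃ A : ℝ, 0 ≤ A ∧ ∀ x, x ≠ 0 → ‖x‖ ≤ R → |f x - L| ≤ A * ‖x‖^(1+α) := by
  set g : Pl → ℝ := Function.update f 0 L with hg
  have hs : 0 < 1 + α := by linarith
  have hgf : ∀ x, x ≠ 0 → g x = f x := fun x hx => by simp [hg, hx]
  have hev : ∀ x, x ≠ 0 → f =ᶠ[𝓝 x] g := fun x hx => by
    filter_upwards [isOpen_ne.mem_nhds hx] with y hy
    exact (hgf y hy).symm
  have g0 : ContinuousAt g 0 := continuousAt_update_same.2 h0
  have gf : ∀ x, x ≠ 0 → ‖x‖ ≤ R → ContDiffAt ℝ 2 g x := fun x hx hxR =>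
    (hf x hx hxR).congr_of_eventuallyEq (hev x hx).symm
  have gL : ∀ x, x ≠ 0 → ‖x‖ ≤ R → |lap g x| ≤ C * ‖x‖^(2*α) := fun x hx hxR => by
    rw [← lap_congr (hev x hx)]; exact hL x hx hxR
  obtain ⟨A, hA, hA2⟩ := rfx_bound hR hR1 hα hα0 hC g0 gf gL
  have ho : ∀ x y, ‖x‖ ≤ R → ‖x‖ = ‖y‖ → g x - g y ≤ A * ‖x‖^(1+α) := fun x y h1 h2 =>
    osc_bound hA2 hA h1 h2
  refine ⟨A + (C+1)/(4 * (1+α)^2), by positivity, fun x hx hxR => ?_⟩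
  have u1 := center_upper hα hα0 hR1 hC g0 gf gL hA ho hx hxR
  have u2 := center_upper (f := fun x => - g x) hα hα0 hR1 hC g0.neg
    (fun x hx hxR => (gf x hx hxR).neg)
    (fun x hx hxR => by rw [lap_neg (gf x hx hxR), abs_neg]; exact gL x hx hxR) hA
    (fun x y h1 h2 => by
      have := ho y x (by rwa [← h2]) h2.symm
      rw [h2]; linarith) hx hxR
  have e0 : g 0 = L := by simp [hg]
  rw [e0, hgf x hx] at u1 u2
  exact abs_le.2 ⟨by linarith, by linarith⟩



/-- second difference quotient -/
def sdq (i j : Fin 2) (h : ℝ) (u : Pl → ℝ) (y : Pl) : ℝ :=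
  (u ((h • EuclideanSpace.single i 1 + h • EuclideanSpace.single j 1) + y)
    - u (h • EuclideanSpace.single i 1 + y) - u (h • EuclideanSpace.single j 1 + y) + u y) / h ^ 2

lemma shift_mem {x₀ y : Pl} {R s t : ℝ} (i j : Fin 2) (hy : y ∈ closedBall x₀ R)
    (hs : 0 ≤ s) (ht : 0 ≤ t) (hst : s + t ≤ R) :
    y + s • EuclideanSpace.single i 1 + t • EuclideanSpace.single j 1 ∈ closedBall x₀ (2 * R) := by
  rw [mem_closedBall_iff_norm] at hy ⊢
  have e : y + s • EuclideanSpace.single i 1 + t • EuclideanSpace.single j 1 - x₀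
    = (y - x₀) + s • (EuclideanSpace.single i 1 : Pl) + t • EuclideanSpace.single j 1 := by abel
  rw [e]
  refine (norm_add₃_le).trans ?_
  rw [norm_smul, norm_smul, single_norm, single_norm, Real.norm_of_nonneg hs,
    Real.norm_of_nonneg ht]
  linarith

lemma sdq_mvt {u : Pl → ℝ} {x₀ y : Pl} {R h : ℝ} (i j : Fin 2)
    (hu : ∀ z ∈ closedBall x₀ (2 * R), ContDiffAt ℝ 2 u z) (hy : y ∈ closedBall x₀ R)
    (hh : 0 < h) (hhR : 2 * h ≤ R) :
    ∃ z ∈ closedBall x₀ (2 * R), ‖z - y‖ ≤ 2 * h ∧ sdq i j h u y = pd j (pd i u) z := by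
  set ei : Pl := EuclideanSpace.single i 1
  set ej : Pl := EuclideanSpace.single j 1
  have hmem : ∀ s t : ℝ, 0 ≤ s → s ≤ h → 0 ≤ t → t ≤ h → y + s • ei + t • ej ∈
      closedBall x₀ (2 * R) := fun s t h1 h2 h3 h4 => shift_mem i j hy h1 h3 (by linarith)
  have hd1 : ∀ s ∈ Set.Icc (0:ℝ) h, HasDerivAt
      (fun s : ℝ => u (y + h • ej + s • ei) - u (y + s • ei))
      (pd i u (y + h • ej + s • ei) - pd i u (y + s • ei)) s := by
    intro s hs
    refine (line_deriv i s (da (hu _ ?_))).sub (line_deriv i s (da (hu _ ?_)))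
    · have := hmem s h hs.1 hs.2 hh.le le_rfl
      convert this using 1; abel
    · have := hmem s 0 hs.1 hs.2 le_rfl hh.le
      simpa using this
  obtain ⟨s, hs, hse⟩ := exists_hasDerivAt_eq_slope
    (fun s : ℝ => u (y + h • ej + s • ei) - u (y + s • ei))
    (fun s => pd i u (y + h • ej + s • ei) - pd i u (y + s • ei)) hh
    (fun s hs => (hd1 s hs).continuousAt.continuousWithinAt)
    (fun s hs => hd1 s (Set.Ioo_subset_Icc_self hs))
  have hd2 : ∀ t ∈ Set.Icc (0:ℝ) h, HasDerivAt
      (fun t : ℝ => pd i u (y + s • ei + t • ej)) (pd j (pd i u) (y + s • ei + t • ej)) t := by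
    intro t ht
    exact line_deriv j t (da1 i (hu _ (hmem s t hs.1.le hs.2.le ht.1 ht.2)))
  obtain ⟨t, ht, hte⟩ := exists_hasDerivAt_eq_slope
    (fun t : ℝ => pd i u (y + s • ei + t • ej))
    (fun t => pd j (pd i u) (y + s • ei + t • ej)) hh
    (fun s hs => (hd2 s hs).continuousAt.continuousWithinAt)
    (fun s hs => hd2 s (Set.Ioo_subset_Icc_self hs))
  refine ⟨_, hmem s t hs.1.le hs.2.le ht.1.le ht.2.le, ?_, ?_⟩
  · have e : y + s • ei + t • ej - y = s • ei + t • ej := by abel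
    rw [e]
    refine (norm_add_le _ _).trans ?_
    rw [norm_smul, norm_smul, single_norm, single_norm, Real.norm_of_nonneg hs.1.le,
      Real.norm_of_nonneg ht.1.le]
    linarith [hs.2, ht.2]
  · rw [hte]
    simp only [sub_zero, zero_smul, add_zero] at hse ⊢
    have e : y + s • ei + h • ej = y + h • ej + s • ei := by abel
    rw [e, hse, sdq]
    have e1 : h • ei + h • ej + y = y + h • ej + h • ei := by abel
    have e2 : h • ei + y = y + h • ei := by abel
    have e3 : h • ej + y = y + h • ej := by abel
    rw [show h • EuclideanSpace.single i 1 + h • EuclideanSpace.single j 1 + y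
      = y + h • ej + h • ei from e1, show h • EuclideanSpace.single i 1 + y = y + h • ei from e2,
      show h • EuclideanSpace.single j 1 + y = y + h • ej from e3]
    field_simp
    ring

lemma sdq_unif {u : Pl → ℝ} {x₀ : Pl} {R : ℝ} (i j : Fin 2) (hR : 0 < R)
    (hu : ∀ z ∈ closedBall x₀ (2 * R), ContDiffAt ℝ 2 u z) {ε : ℝ} (hε : 0 < ε) :
    ∃ δ > 0, ∀ h, 0 < h → h < δ → ∀ y ∈ closedBall x₀ R,
      |sdq i j h u y - pd j (pd i u) y| ≤ ε := by
  have hc : ContinuousOn (pd j (pd i u)) (closedBall x₀ (2 * R)) := fun z hz =>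
    (cd_pd (m := 0) j (cd_pd (m := 1) i (hu z hz) (by norm_num))
      (by norm_num)).continuousAt.continuousWithinAt
  have huc := (isCompact_closedBall x₀ (2 * R)).uniformContinuousOn_of_continuous hc
  obtain ⟨δ, hδ, hδ2⟩ := Metric.uniformContinuousOn_iff.1 huc ε hε
  refine ⟨min (δ / 2) (R / 2), by positivity, fun h hh hh2 y hy => ?_⟩
  have h1 := hh2.trans_le (min_le_left _ _)
  have h2 := hh2.trans_le (min_le_right _ _)
  obtain ⟨z, hz, hzy, hze⟩ := sdq_mvt i j hu hy hh (by linarith)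
  rw [hze]
  have := hδ2 z hz y (closedBall_subset_closedBall (by linarith) hy)
    (by rw [dist_eq_norm]; linarith)
  rw [Real.dist_eq] at this
  exact this.le

lemma sdq_lap {u F : Pl → ℝ} {x₀ : Pl} {R h : ℝ} (i j : Fin 2)
    (hu : ∀ z ∈ closedBall x₀ (2 * R), ContDiffAt ℝ 2 u z)
    (hl : ∀ z ∈ closedBall x₀ (2 * R), lap u z = F z)
    (hh : 0 < h) (hhR : 2 * h ≤ R) {y : Pl} (hy : y ∈ closedBall x₀ R) :
    ContDiffAt ℝ 2 (sdq i j h u) y ∧ lap (sdq i j h u) y = sdq i j h F y := by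
  set ei : Pl := EuclideanSpace.single i 1
  set ej : Pl := EuclideanSpace.single j 1
  have m1 : (h • ei + h • ej) + y ∈ closedBall x₀ (2 * R) := by
    have := shift_mem (s := h) (t := h) i j hy hh.le hh.le (by linarith)
    convert this using 1; simp only [ei, ej]; abel
  have m2 : h • ei + y ∈ closedBall x₀ (2 * R) := by
    have := shift_mem (s := h) (t := 0) i j hy hh.le le_rfl (by linarith)
    convert this using 1; simp only [ei]; simp; abel
  have m3 : h • ej + y ∈ closedBall x₀ (2 * R) := by
    have := shift_mem (s := 0) (t := h) i j hy le_rfl hh.le (by linarith)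
    convert this using 1; simp only [ej]; simp; abel
  have m4 : y ∈ closedBall x₀ (2 * R) := closedBall_subset_closedBall (by linarith) hy
  have ct : ∀ c : Pl, c + y ∈ closedBall x₀ (2 * R) → ContDiffAt ℝ 2 (fun z => u (c + z)) y := by
    intro c hc
    exact ContDiffAt.comp (f := fun z => c + z) y (hu _ hc) (contDiffAt_const.add contDiffAt_id)
  have e : sdq i j h u = fun y => (1 / h ^ 2) * (u ((h • ei + h • ej) + y) - u (h • ei + y)
      - u (h • ej + y) + u y) := by
    funext z; simp only [sdq, ei, ej]; ring
  have c12 := (ct _ m1).sub (ct _ m2)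
  have c123 := c12.sub (ct _ m3)
  have call := c123.add (hu _ m4)
  refine ⟨?_, ?_⟩
  · rw [e]; exact contDiffAt_const.mul call
  · rw [e, lap_cmul _ call, lap_add c123 (hu _ m4), lap_sub c12 (ct _ m3),
      lap_sub (ct _ m1) (ct _ m2), lap_trans (hu _ m1), lap_trans (hu _ m2), lap_trans (hu _ m3),
      hl _ m1, hl _ m2, hl _ m3, hl _ m4]
    simp only [sdq, ei, ej]; ring

lemma norm_clm_le (T : Pl →L[ℝ] ℝ) {B : ℝ} (hB : 0 ≤ B)
    (h : ∀ k : Fin 2, |T (EuclideanSpace.single k 1)| ≤ B) : ‖T‖ ≤ 2 * B := by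
  refine ContinuousLinearMap.opNorm_le_bound _ (by linarith) fun v => ?_
  have hv : ∀ k, |v k| ≤ ‖v‖ := fun k => by
    simpa using PiLp.norm_apply_le v k
  conv_lhs => rw [vec_eq v]
  rw [map_add, map_smul, map_smul, Real.norm_eq_abs]
  refine (abs_add_le _ _).trans ?_
  rw [smul_eq_mul, smul_eq_mul, abs_mul, abs_mul]
  have a0 := mul_le_mul (hv 0) (h 0) (abs_nonneg _) (norm_nonneg _)
  have a1 := mul_le_mul (hv 1) (h 1) (abs_nonneg _) (norm_nonneg _)
  linarith

lemma reg_snd {u F : Pl → ℝ} {x₀ : Pl} {R : ℝ} (i j : Fin 2) (hR : 0 < R)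
    (hu : ∀ z ∈ closedBall x₀ (2 * R), ContDiffAt ℝ 2 u z)
    (hF : ∀ z ∈ closedBall x₀ (2 * R), ContDiffAt ℝ 2 F z)
    (hl : ∀ z ∈ closedBall x₀ (2 * R), lap u z = F z) :
    ContDiffAt ℝ 1 (pd j (pd i u)) x₀ := by
  set g := pd j (pd i u)
  set hn : ℕ → ℝ := fun n => R / 2 * (1 / ((n:ℝ) + 1))
  have hn0 : ∀ n, 0 < hn n := fun n => by positivity
  have hnR : ∀ n, 2 * hn n ≤ R := fun n => by
    have : 1 / ((n:ℝ) + 1) ≤ 1 := by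
      rw [div_le_one (by positivity)]; linarith [n.cast_nonneg (α := ℝ)]
    have := mul_le_mul_of_nonneg_left this (by positivity : 0 ≤ R / 2)
    simp only [hn]; linarith
  have hnt : Tendsto hn atTop (𝓝 0) := by
    have := (tendsto_one_div_add_atTop_nhds_zero_nat (𝕜 := ℝ)).const_mul (R / 2)
    simpa [hn] using this
  set T : ℕ → Pl → ℝ := fun n => sdq i j (hn n) u
  have hT : ∀ n, ∀ y ∈ closedBall x₀ R, ContDiffAt ℝ 2 (T n) y ∧ lap (T n) y
      = sdq i j (hn n) F y := fun n y hy => sdq_lap i j hu hl (hn0 n) (hnR n) hy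
  have hTg : ∀ ε > 0, ∃ n₀, ∀ n ≥ n₀, ∀ y ∈ closedBall x₀ R, |T n y - g y| ≤ ε := by
    intro ε hε
    obtain ⟨δ, hδ, h⟩ := sdq_unif i j hR hu hε
    obtain ⟨n₀, hn₀⟩ := eventually_atTop.1 (hnt.eventually (gt_mem_nhds hδ))
    exact ⟨n₀, fun n hn y hy => h _ (hn0 n) (hn₀ n hn) y hy⟩
  have hTF : ∀ ε > 0, ∃ n₀, ∀ n ≥ n₀, ∀ y ∈ closedBall x₀ R,
      |sdq i j (hn n) F y - pd j (pd i F) y| ≤ ε := by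
    intro ε hε
    obtain ⟨δ, hδ, h⟩ := sdq_unif i j hR hF hε
    obtain ⟨n₀, hn₀⟩ := eventually_atTop.1 (hnt.eventually (gt_mem_nhds hδ))
    exact ⟨n₀, fun n hn y hy => h _ (hn0 n) (hn₀ n hn) y hy⟩
  have hsub : ∀ y ∈ ball x₀ (R / 2), closedBall y (R / 2) ⊆ closedBall x₀ R := by
    intro y hy
    apply closedBall_subset_closedBall'
    have := mem_ball.1 hy; linarith
  have hcau : UniformCauchySeqOn (fun n => fderiv ℝ (T n)) atTop (ball x₀ (R / 2)) := by
    rw [Metric.uniformCauchySeqOn_iff]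
    intro ε hε
    set C := 2 * ((R / 2) + 3 / (R / 2))
    have hC : 0 < C := by positivity
    obtain ⟨n1, h1⟩ := hTg (ε / (4 * C)) (by positivity)
    obtain ⟨n2, h2⟩ := hTF (ε / (4 * C)) (by positivity)
    refine ⟨max n1 n2, fun m hm n hn y hy => ?_⟩
    have hyR : y ∈ closedBall x₀ R := hsub y hy (mem_closedBall_self (by positivity))
    set M := ε / (2 * C)
    have hM : M = ε / (4 * C) + ε / (4 * C) := by simp only [M]; field_simp; norm_num
    have hM0 : 0 < M := by positivity
    have hk : ∀ k, |(fderiv ℝ (T m) y - fderiv ℝ (T n) y) (EuclideanSpace.single k 1)|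
        ≤ M * (R / 2) + 3 * M / (R / 2) := by
      intro k
      have := grad_est (f := fun z => T m z - T n z) (x₀ := y) (d := R / 2) (M := M) (F := M)
        (c := 0) k (by positivity) hM0
        (fun z hz => (hT m z (hsub y hy hz)).1.sub (hT n z (hsub y hy hz)).1)
        (fun z hz => ?_) (fun z hz => ?_)
      · have hs : pd k (fun z => T m z - T n z) y =
            (fderiv ℝ (T m) y - fderiv ℝ (T n) y) (EuclideanSpace.single k 1) := by
          rw [pd, fderiv_fun_sub (da (hT m y hyR).1) (da (hT n y hyR).1)]
        rw [← hs]; exact this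
      · have a1 := abs_le.1 (h1 m (le_of_max_le_left hm) z (hsub y hy hz))
        have a2 := abs_le.1 (h1 n (le_of_max_le_left hn) z (hsub y hy hz))
        rw [abs_le]; constructor <;> linarith [a1.1, a1.2, a2.1, a2.2]
      · have z1 := hT m z (hsub y hy hz)
        have z2 := hT n z (hsub y hy hz)
        have a1 := abs_le.1 (h2 m (le_of_max_le_right hm) z (hsub y hy hz))
        have a2 := abs_le.1 (h2 n (le_of_max_le_right hn) z (hsub y hy hz))
        rw [lap_sub z1.1 z2.1, z1.2, z2.2]
        rw [abs_le]; constructor <;> linarith [a1.1, a1.2, a2.1, a2.2]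
    have := norm_clm_le _ (by positivity) hk
    rw [dist_eq_norm]
    refine this.trans_lt ?_
    have e : 2 * (M * (R / 2) + 3 * M / (R / 2)) = ε / 2 := by
      have : 2 * (M * (R / 2) + 3 * M / (R / 2)) = M * C := by simp only [C]; ring
      rw [this]; simp only [M]; field_simp
    rw [e]; linarith
  have hlim : ∀ y, ∃ L, y ∈ ball x₀ (R / 2) → Tendsto (fun n => fderiv ℝ (T n) y) atTop (𝓝 L) := by
    intro y
    by_cases hy : y ∈ ball x₀ (R / 2)
    · obtain ⟨L, hL⟩ := cauchySeq_tendsto_of_complete (hcau.cauchySeq hy)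
      exact ⟨L, fun _ => hL⟩
    · exact ⟨0, fun h => absurd h hy⟩
  choose g' hg' using hlim
  have hunif := hcau.tendstoUniformlyOn_of_tendsto (f := g') hg'
  have hb : ∀ y ∈ ball x₀ (R / 2), y ∈ closedBall x₀ R := fun y hy =>
    hsub y hy (mem_closedBall_self (by positivity))
  rw [contDiffAt_one_iff]
  refine ⟨g', ball x₀ (R / 2), ball_mem_nhds _ (by positivity), ?_, ?_⟩
  · refine hunif.continuousOn (Eventually.frequently (Eventually.of_forall fun n y hy => ?_))
    exact ((hT n y (hb y hy)).1.fderiv_right (m := 1)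
      (by norm_num)).continuousAt.continuousWithinAt
  · intro y hy
    refine hasFDerivAt_of_tendstoUniformlyOn isOpen_ball hunif
      (fun n z hz => (da (hT n z (hb z hz)).1).hasFDerivAt) (fun z hz => ?_) hy
    rw [Metric.tendsto_atTop]
    intro ε hε
    obtain ⟨n₀, h⟩ := hTg (ε / 2) (by positivity)
    exact ⟨n₀, fun n hn => by
      rw [Real.dist_eq]; exact (h n hn z (hb z hz)).trans_lt (by linarith)⟩

lemma cd_succ_of_pd {f : Pl → ℝ} {x : Pl} {n : ℕ} (hd : ∀ᶠ y in 𝓝 x, DifferentiableAt ℝ f y)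
    (h : ∀ i, ContDiffAt ℝ n (pd i f) x) : ContDiffAt ℝ (n + 1) f x := by
  rw [contDiffAt_succ_iff_hasFDerivAt]
  refine ⟨fderiv ℝ f, ⟨_, hd, fun y hy => DifferentiableAt.hasFDerivAt hy⟩, ?_⟩
  have e : fderiv ℝ f = fun y => pd 0 f y • (EuclideanSpace.proj (0 : Fin 2) : Pl →L[ℝ] ℝ)
      + pd 1 f y • (EuclideanSpace.proj (1 : Fin 2) : Pl →L[ℝ] ℝ) := by
    funext y
    ext v
    conv_lhs => rw [vec_eq v]
    rw [map_add, map_smul, map_smul]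
    simp [pd]; ring
  rw [e]
  exact ((h 0).smul contDiffAt_const).add ((h 1).smul contDiffAt_const)

/-- regularity -/
lemma cd_three {u F : Pl → ℝ} {U : Set Pl} (hU : IsOpen U)
    (hu : ∀ z ∈ U, ContDiffAt ℝ 2 u z) (hF : ∀ z ∈ U, ContDiffAt ℝ 2 F z)
    (hl : ∀ z ∈ U, lap u z = F z) : ∀ x ∈ U, ContDiffAt ℝ 3 u x := by
  intro x hx
  obtain ⟨R, hR, hRU⟩ := Metric.nhds_basis_closedBall.mem_iff.1 (hU.mem_nhds hx)
  have hs : closedBall x (2 * (R / 2)) ⊆ U := by convert hRU using 2; ring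
  have h1 : ∀ i j, ContDiffAt ℝ 1 (pd j (pd i u)) x := fun i j =>
    reg_snd i j (half_pos hR) (fun z hz => hu z (hs hz)) (fun z hz => hF z (hs hz))
      (fun z hz => hl z (hs hz))
  have hev : ∀ᶠ y in 𝓝 x, ContDiffAt ℝ 2 u y := cd_ev (n := 2) (hu x hx)
  have h2 : ∀ i, ContDiffAt ℝ 2 (pd i u) x := by
    intro i
    have := cd_succ_of_pd (f := pd i u) (x := x) (n := 1)
      (hev.mono fun y hy => da1 i hy) (fun j => by exact_mod_cast h1 i j)
    convert this using 1; norm_num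
  have := cd_succ_of_pd (f := u) (x := x) (n := 2) (hev.mono fun y hy => da hy)
    (fun j => by exact_mod_cast h2 j)
  convert this using 1; norm_num



/-- the P-function -/
def Pfun (f a : Pl → ℝ) (y : Pl) : ℝ :=
  1 / 4 * (Real.exp (-a y) * (pd 0 f y * pd 0 f y + pd 1 f y * pd 1 f y)) + Real.cosh (1 / 2 * f y)

lemma cd_Pfun {f a : Pl → ℝ} {x : Pl} (hf : ContDiffAt ℝ 3 f x) (ha : ContDiffAt ℝ 2 a x) :
    ContDiffAt ℝ 2 (Pfun f a) x := by
  have c : ∀ i, ContDiffAt ℝ 2 (pd i f) x := fun i => cd_pd i hf (by norm_num)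
  have hf2 : ContDiffAt ℝ 2 f x := hf.of_le (by norm_num)
  exact (contDiffAt_const.mul (ha.neg.exp.mul (((c 0).mul (c 0)).add ((c 1).mul (c 1))))).add
    (Real.contDiff_cosh.contDiffAt.comp x (contDiffAt_const.mul hf2))

lemma lap_Pfun {f a : Pl → ℝ} {x : Pl} {k : ℝ} (hf : ContDiffAt ℝ 3 f x)
    (ha : ContDiffAt ℝ 2 a x)
    (hlf : ∀ᶠ y in 𝓝 x, lap f y = -2 * (Real.exp (a y) * Real.sinh (1 / 2 * f y)))
    (hla : lap a x = - Real.exp (a x) * Real.cosh (1 / 2 * f x) - k) :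
    ∃ A B : ℝ, lap (Pfun f a) x = 1 / 4 * Real.exp (-a x) * (A ^ 2 + B ^ 2
      + k * ((pd 0 f x) ^ 2 + (pd 1 f x) ^ 2)) := by
  have c : ∀ i, ContDiffAt ℝ 2 (pd i f) x := fun i => cd_pd i hf (by norm_num)
  have hf2 : ContDiffAt ℝ 2 f x := hf.of_le (by norm_num)
  have hE : ContDiffAt ℝ 2 (fun y => Real.exp (-a y)) x := ha.neg.exp
  have hG0 : ContDiffAt ℝ 2 (fun y => pd 0 f y * pd 0 f y) x := (c 0).mul (c 0)
  have hG1 : ContDiffAt ℝ 2 (fun y => pd 1 f y * pd 1 f y) x := (c 1).mul (c 1)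
  have hG : ContDiffAt ℝ 2 (fun y => pd 0 f y * pd 0 f y + pd 1 f y * pd 1 f y) x := hG0.add hG1
  have hh : ContDiffAt ℝ 2 (fun y => 1 / 2 * f y) x := contDiffAt_const.mul hf2
  have hC : ContDiffAt ℝ 2 (fun y => Real.cosh (1 / 2 * f y)) x :=
    Real.contDiff_cosh.contDiffAt.comp x hh
  have hna : ContDiffAt ℝ 2 (fun y => - a y) x := ha.neg
  have pna : ∀ i, pd i (fun y => - a y) x = - pd i a x := fun i => by
    have := pd_comp (φ := fun t => -t) i (da ha) ((hasDerivAt_id (a x)).neg)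
    simpa using this
  have pE : ∀ i, pd i (fun y => Real.exp (-a y)) x = - Real.exp (-a x) * pd i a x := fun i => by
    rw [pd_comp (φ := Real.exp) i (da hna) (Real.hasDerivAt_exp _), pna]; ring
  have lE : lap (fun y => Real.exp (-a y)) x =
      Real.exp (-a x) * ((pd 0 a x) ^ 2 + (pd 1 a x) ^ 2) - Real.exp (-a x) * lap a x := by
    rw [lap_comp (φ := Real.exp) (dphi := Real.exp) hna
      (Eventually.of_forall fun t => Real.hasDerivAt_exp t) (Real.hasDerivAt_exp _), pna, pna,
      lap_neg ha]
    ring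
  have phh : ∀ i, pd i (fun y => 1 / 2 * f y) x = 1 / 2 * pd i f x := fun i => by
    rw [pd_mul i (differentiableAt_const _) (da hf2), pd_const]; ring
  have lC : lap (fun y => Real.cosh (1 / 2 * f y)) x = Real.cosh (1 / 2 * f x) *
      ((1 / 2 * pd 0 f x) ^ 2 + (1 / 2 * pd 1 f x) ^ 2)
        + Real.sinh (1 / 2 * f x) * (1 / 2 * lap f x) := by
    rw [lap_comp (φ := Real.cosh) (dphi := Real.sinh) hh
      (Eventually.of_forall fun t => Real.hasDerivAt_cosh t) (Real.hasDerivAt_sinh _), phh, phh,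
      lap_cmul _ hf2]
  have hs : DifferentiableAt ℝ (fun y => Real.sinh (1 / 2 * f y)) x :=
    da (Real.contDiff_sinh.contDiffAt.comp x hh)
  have hea : DifferentiableAt ℝ (fun y => Real.exp (a y)) x := da ha.exp
  have lj : ∀ j, lap (pd j f) x = -2 * (Real.exp (a x) * Real.sinh (1 / 2 * f x)) * pd j a x
      - Real.exp (a x) * Real.cosh (1 / 2 * f x) * pd j f x := fun j => by
    rw [lap_pd j hf, pd_congr hlf, pd_mul j (differentiableAt_const _) (hea.fun_mul hs),
      pd_mul j hea hs, pd_const, pd_comp (φ := Real.exp) j (da ha) (Real.hasDerivAt_exp _),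
      pd_comp (φ := Real.sinh) j (da hh) (Real.hasDerivAt_sinh _), phh]
    ring
  have e : lap (Pfun f a) x = lap (fun y => 1 / 4 * (Real.exp (-a y) *
      (pd 0 f y * pd 0 f y + pd 1 f y * pd 1 f y)) + Real.cosh (1 / 2 * f y)) x := rfl
  have hl := hlf.self_of_nhds
  have hl' := hl
  rw [lap_eq] at hl'
  refine ⟨pd 0 (pd 0 f) x - pd 1 (pd 1 f) x - pd 0 a x * pd 0 f x + pd 1 a x * pd 1 f x,
    2 * pd 0 (pd 1 f) x - pd 0 a x * pd 1 f x - pd 1 a x * pd 0 f x, ?_⟩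
  rw [e, lap_add (contDiffAt_const.mul (hE.mul hG)) hC, lap_cmul _ (hE.mul hG), lap_mul hE hG,
    lap_add hG0 hG1, lap_mul (c 0) (c 0), lap_mul (c 1) (c 1), lE, lC, pE, pE,
    pd_add 0 (da hG0) (da hG1), pd_add 1 (da hG0) (da hG1), pd_mul 0 (da (c 0)) (da (c 0)),
    pd_mul 0 (da (c 1)) (da (c 1)), pd_mul 1 (da (c 0)) (da (c 0)),
    pd_mul 1 (da (c 1)) (da (c 1)), lj, lj, hla, hl, pd_comm 1 0 hf2]
  have hX := Real.exp_pos (a x)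
  rw [Real.exp_neg]
  have hp : pd 0 (pd 0 f) x = -2 * (Real.exp (a x) * Real.sinh (1 / 2 * f x))
    - pd 1 (pd 1 f) x := by linarith
  rw [hp]
  generalize Real.exp (a x) = X at *
  field_simp
  ring



lemma liouville {N : ℕ} (q : Fin N → Pl) {P : Pl → ℝ} {m : ℝ}
    (hP : ∀ x, x ∉ Set.range q → ContDiffAt ℝ 2 P x ∧ 0 ≤ lap P x)
    (hm : ∀ x, x ∉ Set.range q → P x ≤ m) {x x₀ : Pl} (hx : x ∉ Set.range q)
    (hx₀ : x₀ ∉ Set.range q) : P x ≤ P x₀ := by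
  by_cases hxx : x = x₀
  · rw [hxx]
  refine le_of_forall_pos_le_add fun η hη => ?_
  have hcont : ContinuousAt P x₀ := (hP x₀ hx₀).1.continuousAt
  have hev : ∀ᶠ y in 𝓝 x₀, P y < P x₀ + η := hcont.eventually (gt_mem_nhds (by linarith))
  obtain ⟨d, hd, hdP⟩ := Metric.nhds_basis_closedBall.mem_iff.1 hev
  have hpos : 0 < ‖x - x₀‖ := norm_pos_iff.2 (sub_ne_zero.2 hxx)
  set δ := min d (‖x - x₀‖)
  have hδ : 0 < δ := lt_min hd hpos
  set V := P x₀ + η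
  have hV : ∀ y, ‖y - x₀‖ ≤ δ → P y ≤ V := fun y hy =>
    le_of_lt (hdP (mem_closedBall_iff_norm.2 (hy.trans (min_le_left _ _))))
  have key : ∀ ε > 0, P x ≤ V + ε * ((Real.log (nsq x₀ x) - Real.log (δ ^ 2))
      + ((δ ^ 2) ^ (-1:ℝ) - (nsq x₀ x) ^ (-1:ℝ))) := by
    intro ε hε
    obtain ⟨R, hR1, hR2⟩ : ∃ R : ℝ, ‖x - x₀‖ ≤ R ∧
        m ≤ V + ε * (Real.log (R ^ 2) - Real.log (δ ^ 2)) := by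
      have ht : Tendsto (fun R : ℝ => V + ε * (Real.log (R ^ 2) - Real.log (δ ^ 2))) atTop atTop := by
        refine tendsto_atTop_add_const_left _ _ (Tendsto.const_mul_atTop hε ?_)
        refine tendsto_atTop_add_const_right _ _ ?_
        exact Real.tendsto_log_atTop.comp (tendsto_pow_atTop (by norm_num))
      obtain ⟨R, h1, h2⟩ := ((eventually_ge_atTop ‖x - x₀‖).and (ht.eventually_ge_atTop m)).exists
      exact ⟨R, h1, h2⟩
    set ψ : Pl → ℝ := fun y => (V + ε * ((Real.log (nsq x₀ y) - Real.log (δ ^ 2))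
      + ((δ ^ 2) ^ (-1:ℝ) - (nsq x₀ y) ^ (-1:ℝ)))) - P y
    set K : Set Pl := {y | δ ≤ ‖y - x₀‖ ∧ ‖y - x₀‖ ≤ R}
    have hne : ∀ y, δ ≤ ‖y - x₀‖ → y ≠ x₀ := by
      rintro y hy rfl; simp at hy; linarith
    have hK : IsCompact K := by
      refine (isCompact_closedBall x₀ R).of_isClosed_subset ?_ ?_
      · have a1 : IsClosed {y : Pl | δ ≤ ‖y - x₀‖} := isClosed_le (by fun_prop) (by fun_prop)
        have a2 : IsClosed {y : Pl | ‖y - x₀‖ ≤ R} := isClosed_le (by fun_prop) (by fun_prop)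
        exact a1.inter a2
      · exact fun y hy => mem_closedBall_iff_norm.2 hy.2
    have hcd1 : ∀ y, y ≠ x₀ → ContDiffAt ℝ 2 (fun y => Real.log (nsq x₀ y) - Real.log (δ ^ 2)) y :=
      fun y hy => (cd_log hy).sub contDiffAt_const
    have hcd2 : ∀ y, y ≠ x₀ → ContDiffAt ℝ 2 (fun y => (δ ^ 2) ^ (-1:ℝ) - (nsq x₀ y) ^ (-1:ℝ)) y :=
      fun y hy => contDiffAt_const.sub (cd_pow _ hy)
    have hcd3 : ∀ y, y ≠ x₀ → ContDiffAt ℝ 2 (fun y => (V + ε * ((Real.log (nsq x₀ y) - Real.log (δ ^ 2))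
      + ((δ ^ 2) ^ (-1:ℝ) - (nsq x₀ y) ^ (-1:ℝ))))) y :=
      fun y hy => contDiffAt_const.add (contDiffAt_const.mul ((hcd1 y hy).add (hcd2 y hy)))
    have hcd : ∀ y, y ≠ x₀ → y ∉ Set.range q → ContDiffAt ℝ 2 ψ y := fun y hy hyq =>
      (hcd3 y hy).sub (hP y hyq).1
    have hlap : ∀ y, y ≠ x₀ → y ∉ Set.range q → lap ψ y < 0 := fun y hy hyq => by
      have e : lap ψ y = - (4 * ε * (nsq x₀ y) ^ ((-1:ℝ) - 1)) - lap P y := by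
        simp only [ψ]
        rw [lap_sub (hcd3 y hy) (hP y hyq).1,
          lap_add contDiffAt_const (contDiffAt_const.mul ((hcd1 y hy).add (hcd2 y hy))),
          lap_cmul _ ((hcd1 y hy).add (hcd2 y hy)), lap_add (hcd1 y hy) (hcd2 y hy),
          lap_sub (cd_log hy) contDiffAt_const, lap_sub contDiffAt_const (cd_pow _ hy),
          lap_const, lap_const, lap_const, lap_log hy, lap_pow _ hy]
        ring
      have h1 := (hP y hyq).2
      have h2 : 0 < 4 * ε * (nsq x₀ y) ^ ((-1:ℝ) - 1) := by
        have := Real.rpow_pos_of_pos (nsq_pos hy) ((-1:ℝ) - 1)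
        positivity
      rw [e]; linarith
    have hlow : ∀ y, δ ≤ ‖y - x₀‖ → 0 ≤ (Real.log (nsq x₀ y) - Real.log (δ ^ 2)) ∧
        0 ≤ (δ ^ 2) ^ (-1:ℝ) - (nsq x₀ y) ^ (-1:ℝ) := by
      intro y hy
      have h1 : δ ^ 2 ≤ nsq x₀ y := by unfold nsq; gcongr
      refine ⟨sub_nonneg.2 (Real.log_le_log (by positivity) h1), sub_nonneg.2 ?_⟩
      exact Real.rpow_le_rpow_of_nonpos (by positivity) h1 (by norm_num)
    have hlow2 : ∀ y, δ ≤ ‖y - x₀‖ → V - P y ≤ ψ y := by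
      intro y hy
      obtain ⟨h1, h2⟩ := hlow y hy
      have := mul_nonneg hε.le (add_nonneg h1 h2)
      simp only [ψ]; linarith
    have := comparison_rem (K := K) (D := {y | δ < ‖y - x₀‖ ∧ ‖y - x₀‖ < R} ∩ (Set.range q)ᶜ)
      (ψ := ψ) q (m - V) hK
      (fun y hy => (hcd y (hne y hy.1.1) hy.2).continuousAt.continuousWithinAt) ?_ ?_ ?_ x
      ⟨min_le_right _ _, hR1⟩ hx
    · simp only [ψ] at this; linarith
    · rintro y ⟨⟨h1, h2⟩, h3⟩
      refine ⟨?_, hcd y (hne y h1.le) h3, hlap y (hne y h1.le) h3⟩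
      have a1 : IsOpen {y : Pl | δ < ‖y - x₀‖} := isOpen_lt (by fun_prop) (by fun_prop)
      have a2 : IsOpen {y : Pl | ‖y - x₀‖ < R} := isOpen_lt (by fun_prop) (by fun_prop)
      have ho : IsOpen {y : Pl | δ < ‖y - x₀‖ ∧ ‖y - x₀‖ < R} := a1.inter a2
      exact mem_of_superset (ho.mem_nhds ⟨h1, h2⟩) fun z hz => ⟨hz.1.le, hz.2.le⟩
    · intro y hy hyq
      have := hlow2 y hy.1
      have := hm y hyq
      linarith
    · intro y hy hyq hyD
      by_cases h1 : ‖y - x₀‖ ≤ δ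
      · have := hlow2 y hy.1
        have := hV y h1
        linarith
      · have h2 : ‖y - x₀‖ = R := by
          refine le_antisymm hy.2 (not_lt.1 fun h => hyD ⟨⟨not_le.1 h1, h⟩, hyq⟩)
        have h3 := (hlow y hy.1).2
        have h4 := hm y hyq
        have h5 := mul_nonneg hε.le h3
        have h6 : nsq x₀ y = R ^ 2 := by rw [nsq, h2]
        simp only [ψ]
        rw [h6] at h5 ⊢
        linarith
  refine le_of_forall_pos_le_add fun η' hη' => ?_
  set B := ((Real.log (nsq x₀ x) - Real.log (δ ^ 2))
      + ((δ ^ 2) ^ (-1:ℝ) - (nsq x₀ x) ^ (-1:ℝ)))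
  have h1 := key (η' / (|B| + 1)) (by positivity)
  have h2 : η' / (|B| + 1) * B ≤ η' := by
    rw [div_mul_eq_mul_div, div_le_iff₀ (by positivity)]
    have := le_abs_self B
    nlinarith
  linarith



lemma Pfun_bound {f a : Pl → ℝ} {x : Pl} {E G B : ℝ} (hE : Real.exp (-a x) ≤ E)
    (hG : ∀ i, |pd i f x| ≤ G) (hB : |f x| ≤ B) :
    Pfun f a x ≤ 1 / 4 * (E * (G ^ 2 + G ^ 2)) + Real.cosh (1 / 2 * B) := by
  have hs : ∀ i, pd i f x * pd i f x ≤ G ^ 2 := fun i => by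
    rw [← pow_two, ← sq_abs]
    exact pow_le_pow_left₀ (abs_nonneg _) (hG i) 2
  have hc : Real.cosh (1 / 2 * f x) ≤ Real.cosh (1 / 2 * B) := by
    rw [Real.cosh_le_cosh, abs_mul, abs_mul]
    exact mul_le_mul_of_nonneg_left (hB.trans (le_abs_self _)) (abs_nonneg _)
  have hE0 := Real.exp_pos (-a x)
  have hE1 : 0 ≤ E := hE0.le.trans hE
  unfold Pfun
  have h0 := hs 0
  have h1 := hs 1
  gcongr
  exact add_nonneg (mul_self_nonneg _) (mul_self_nonneg _)

lemma near_bound {f a : Pl → ℝ} {c : Pl} {α C C' L : ℝ} (hα : -1 < α) (hα0 : α ≤ 0)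
    (h0 : Tendsto f (𝓝[≠] c) (𝓝 L))
    (hf : ∀ᶠ x in 𝓝[≠] c, ContDiffAt ℝ 2 f x)
    (hl : ∀ᶠ x in 𝓝[≠] c, |lap f x| ≤ C * (‖x - c‖ ^ α) ^ 2)
    (he : ∀ᶠ x in 𝓝[≠] c, Real.exp (-a x) ≤ C' * ((‖x - c‖ ^ α) ^ 2)⁻¹) :
    ∃ m, ∀ᶠ x in 𝓝[≠] c, Pfun f a x ≤ m := by
  have hall := hf.and (hl.and he)
  rw [eventually_nhdsWithin_iff, Metric.nhds_basis_closedBall.eventually_iff] at hall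
  obtain ⟨R', hR', hall⟩ := hall
  set R := min R' 1
  have hR : 0 < R := lt_min hR' one_pos
  have hR1 : R ≤ 1 := min_le_right _ _
  have hall' : ∀ x, x ≠ c → ‖x - c‖ ≤ R → ContDiffAt ℝ 2 f x ∧
      |lap f x| ≤ C * (‖x - c‖ ^ α) ^ 2 ∧ Real.exp (-a x) ≤ C' * ((‖x - c‖ ^ α) ^ 2)⁻¹ :=
    fun x hx hxR => hall (mem_closedBall_iff_norm.2 (hxR.trans (min_le_left _ _))) hx
  have hC : 0 ≤ C := by
    have hne : c + EuclideanSpace.single 0 R ≠ c := by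
      intro h
      have h2 : ‖(EuclideanSpace.single 0 R : Pl)‖ = 0 := by
        rw [norm_eq_zero]; simpa using h
      simp at h2; linarith
    have hn : ‖c + EuclideanSpace.single 0 R - c‖ = R := by
      rw [add_sub_cancel_left]; simp [abs_of_pos hR]
    have := (hall' _ hne hn.le).2.1
    rw [hn] at this
    have h3 := (abs_nonneg _).trans this
    have h4 : 0 < (R ^ α) ^ 2 := by positivity
    exact nonneg_of_mul_nonneg_left h3 h4
  have hp2 : ∀ r : ℝ, 0 < r → r ^ (2 * α) = (r ^ α) ^ 2 := fun r hr => by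
    rw [two_mul, Real.rpow_add hr, pow_two]
  have hp1 : ∀ r : ℝ, 0 < r → r ^ (1 + α) = r * r ^ α := fun r hr => by
    rw [Real.rpow_add hr, Real.rpow_one]
  have hpos : ∀ x : Pl, x ≠ c → 0 < ‖x - c‖ := fun x hx => norm_pos_iff.2 (sub_ne_zero.2 hx)
  obtain ⟨A, hA, hAf⟩ := punctured (f := fun y => f (c + y)) (R := R) (α := α) (C := C) (L := L)
    hR hR1 hα hα0 hC (by
      refine h0.comp ?_
      rw [tendsto_nhdsWithin_iff]
      refine ⟨?_, ?_⟩
      · have : Continuous (fun y : Pl => c + y) := by fun_prop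
        have := this.tendsto 0
        rw [add_zero] at this
        exact this.mono_left nhdsWithin_le_nhds
      · filter_upwards [self_mem_nhdsWithin] with y hy
        simpa using hy) (by
      intro y hy hyR
      have := (hall' (c + y) (by simpa using hy) (by simpa using hyR)).1
      exact ContDiffAt.comp (f := fun z => c + z) y this (contDiffAt_const.add contDiffAt_id)) (by
      intro y hy hyR
      have := (hall' (c + y) (by simpa using hy) (by simpa using hyR))
      rw [lap_trans this.1, hp2 _ (norm_pos_iff.2 hy)]
      simpa using this.2.1)
  have hAf' : ∀ x, x ≠ c → ‖x - c‖ ≤ R → |f x - L| ≤ A * (‖x - c‖ * ‖x - c‖ ^ α) := by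
    intro x hx hxR
    have := hAf (x - c) (sub_ne_zero.2 hx) hxR
    rw [hp1 _ (hpos x hx)] at this
    simpa using this
  set G := 2 * C + 12 * A + 6
  refine ⟨1 / 4 * (C' * (G ^ 2 + G ^ 2)) + Real.cosh (1 / 2 * (A + |L|)), ?_⟩
  rw [eventually_nhdsWithin_iff, Metric.nhds_basis_closedBall.eventually_iff]
  refine ⟨R / 2, by positivity, fun x hx hxc => ?_⟩
  rw [mem_closedBall_iff_norm] at hx
  replace hxc : x ≠ c := hxc
  set r := ‖x - c‖ with hr
  have hr0 : 0 < r := hpos x hxc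
  set X := r ^ α with hX
  have hX0 : 0 < X := Real.rpow_pos_of_pos hr0 _
  have hrX : r * X ≤ 1 := by
    rw [hX, ← hp1 r hr0]
    exact Real.rpow_le_one hr0.le (by linarith) (by linarith)
  have hball : ∀ y ∈ closedBall x (r / 2), y ≠ c ∧ r / 2 ≤ ‖y - c‖ ∧ ‖y - c‖ ≤ 2 * r ∧
      ‖y - c‖ ≤ R := by
    intro y hy
    rw [mem_closedBall_iff_norm] at hy
    have h1 : r ≤ ‖x - y‖ + ‖y - c‖ := by
      rw [hr]; exact norm_sub_le_norm_sub_add_norm_sub x y c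
    have h2 := norm_sub_le_norm_sub_add_norm_sub y x c
    rw [norm_sub_rev x y] at h1
    rw [← hr] at h2
    refine ⟨?_, by linarith, by linarith, by linarith⟩
    rintro rfl
    simp at h1; linarith
  have hgrad : ∀ i, |pd i f x| ≤ G * X := by
    intro i
    have := grad_est (f := f) (x₀ := x) (d := r / 2) (M := (2 * A + 1) * (r * X))
      (F := 4 * C * X ^ 2) (c := L) i (by positivity) (by positivity)
      (fun y hy => (hall' y (hball y hy).1 (hball y hy).2.2.2).1) ?_ ?_
    · refine this.trans ?_
      have e : 4 * C * X ^ 2 * (r / 2) + 3 * ((2 * A + 1) * (r * X)) / (r / 2)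
        = (2 * C * (r * X) + 12 * A + 6) * X := by field_simp; ring
      rw [e]
      have : 2 * C * (r * X) ≤ 2 * C * 1 := by gcongr
      simp only [G]
      exact mul_le_mul_of_nonneg_right (by linarith) (by positivity)
    · intro y hy
      obtain ⟨h1, h2, h3, h4⟩ := hball y hy
      refine (hAf' y h1 h4).trans ?_
      rw [← hp1 _ (hpos y h1)]
      have h5 : ‖y - c‖ ^ (1 + α) ≤ (2 * r) ^ (1 + α) :=
        Real.rpow_le_rpow (norm_nonneg _) h3 (by linarith)
      have h6 : (2 * r) ^ (1 + α) ≤ 2 * (r * X) := by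
        rw [Real.mul_rpow (by norm_num) hr0.le, hp1 r hr0]
        have : (2:ℝ) ^ (1 + α) ≤ 2 ^ (1:ℝ) :=
          Real.rpow_le_rpow_of_exponent_le (by norm_num) (by linarith)
        rw [Real.rpow_one] at this
        gcongr
      calc A * ‖y - c‖ ^ (1 + α) ≤ A * (2 * (r * X)) := by gcongr; linarith
        _ ≤ (2 * A + 1) * (r * X) := by nlinarith [mul_pos hr0 hX0]
    · intro y hy
      obtain ⟨h1, h2, h3, h4⟩ := hball y hy
      refine (hall' y h1 h4).2.1.trans ?_
      have h5 : ‖y - c‖ ^ α ≤ (r / 2) ^ α :=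
        Real.rpow_le_rpow_of_nonpos (by positivity) h2 hα0
      have h6 : (r / 2) ^ α ≤ 2 * X := by
        rw [Real.div_rpow hr0.le (by norm_num), div_le_iff₀ (by positivity)]
        have : (2:ℝ) ^ (-1:ℝ) ≤ 2 ^ α :=
          Real.rpow_le_rpow_of_exponent_le (by norm_num) hα.le
        rw [Real.rpow_neg_one] at this
        rw [← hX]
        nlinarith
      calc C * (‖y - c‖ ^ α) ^ 2 ≤ C * (2 * X) ^ 2 := by
            gcongr; exact h5.trans h6
        _ = 4 * C * X ^ 2 := by ring
  have hfb : |f x| ≤ A + |L| := by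
    have h1 := hAf' x hxc (by linarith)
    have h2 : A * (r * X) ≤ A * 1 := by gcongr
    have h3 : |f x| ≤ |f x - L| + |L| := by
      have := abs_add_le (f x - L) L
      simpa using this
    rw [← hr, ← hX] at h1
    linarith
  have := Pfun_bound (hall' x hxc (by linarith)).2.2 hgrad hfb
  refine this.trans (le_of_eq ?_)
  rw [← hr, ← hX]
  field_simp

lemma tendsto_kinv : Tendsto kinv (𝓝[≠] 0) (Bornology.cobounded Pl) := by
  rw [← tendsto_norm_atTop_iff_cobounded]
  have : (fun x => ‖kinv x‖) = fun x : Pl => ‖x‖⁻¹ := funext norm_kinv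
  rw [this]
  refine tendsto_inv_nhdsGT_zero.comp ?_
  rw [tendsto_nhdsWithin_iff]
  refine ⟨tendsto_norm_zero.mono_left nhdsWithin_le_nhds, ?_⟩
  filter_upwards [self_mem_nhdsWithin] with y hy
  exact norm_pos_iff.2 hy

lemma inf_bound {f a : Pl → ℝ} {C C' L : ℝ} (hC : 0 ≤ C)
    (h0 : Tendsto f (Bornology.cobounded Pl) (𝓝 L))
    (hf : ∀ᶠ x in Bornology.cobounded Pl, ContDiffAt ℝ 2 f x)
    (hl : ∀ᶠ x in Bornology.cobounded Pl, |lap f x| ≤ C * (‖x‖ ^ 4)⁻¹)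
    (he : ∀ᶠ x in Bornology.cobounded Pl, Real.exp (-a x) ≤ C' * ‖x‖ ^ 4) :
    ∃ m, ∀ᶠ x in Bornology.cobounded Pl, Pfun f a x ≤ m := by
  have hall := hf.and (hl.and he)
  rw [← comap_norm_atTop, eventually_comap, eventually_atTop] at hall
  obtain ⟨R', hall⟩ := hall
  set R := max R' 1
  have hR1 : 1 ≤ R := le_max_right _ _
  have hR : 0 < R := by linarith
  have hall' : ∀ x : Pl, R ≤ ‖x‖ → ContDiffAt ℝ 2 f x ∧
      |lap f x| ≤ C * (‖x‖ ^ 4)⁻¹ ∧ Real.exp (-a x) ≤ C' * ‖x‖ ^ 4 :=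
    fun x hx => hall ‖x‖ ((le_max_left _ _).trans hx) x rfl
  have hk : ∀ x : Pl, x ≠ 0 → ‖x‖ ≤ R⁻¹ → R ≤ ‖kinv x‖ := by
    intro x hx hxR
    rw [norm_kinv]
    rw [le_inv_comm₀ hR (norm_pos_iff.2 hx)]; exact hxR
  obtain ⟨A, hA, hAf⟩ := punctured (f := fun y => f (kinv y)) (R := R⁻¹) (α := 0) (C := C) (L := L)
    (by positivity) (inv_le_one_of_one_le₀ hR1) (by norm_num) le_rfl hC (h0.comp tendsto_kinv) (by
      intro y hy hyR
      exact ContDiffAt.comp (f := kinv) y (hall' _ (hk y hy hyR)).1 (cd_kinv hy)) (by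
      intro y hy hyR
      obtain ⟨h1, h2, -⟩ := hall' _ (hk y hy hyR)
      have hy0 := norm_pos_iff.2 hy
      rw [lap_kinv hy h1, abs_mul, abs_of_nonneg (by positivity)]
      rw [norm_kinv] at h2
      have e : nsq 0 y = ‖y‖ ^ 2 := by simp [nsq]
      rw [e, mul_zero, Real.rpow_zero]
      calc ((‖y‖ ^ 2) ^ 2)⁻¹ * |lap f (kinv y)| ≤ ((‖y‖ ^ 2) ^ 2)⁻¹ * (C * (‖y‖⁻¹ ^ 4)⁻¹) := by
            gcongr
        _ = C * 1 := by field_simp)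
  have hAf' : ∀ x : Pl, R ≤ ‖x‖ → |f x - L| ≤ A * ‖x‖⁻¹ := by
    intro x hx
    have hx0 : x ≠ 0 := by rintro rfl; simp at hx; linarith
    have h1 : ‖kinv x‖ ≤ R⁻¹ := by
      rw [norm_kinv]; exact inv_anti₀ hR hx
    have h2 : kinv x ≠ 0 := by
      rw [← norm_pos_iff, norm_kinv]
      exact inv_pos.2 (norm_pos_iff.2 hx0)
    have := hAf (kinv x) h2 h1
    rw [add_zero, Real.rpow_one, norm_kinv, kinv_kinv] at this
    exact this
  set G := 8 * C + 12 * A + 6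
  refine ⟨1 / 4 * (C' * (G ^ 2 + G ^ 2)) + Real.cosh (1 / 2 * (A + |L|)), ?_⟩
  rw [← comap_norm_atTop, eventually_comap, eventually_atTop]
  refine ⟨2 * R, ?_⟩
  rintro r hrR x rfl
  set r := ‖x‖ with hr
  have hr1 : 1 ≤ r := by linarith
  have hr0 : 0 < r := by linarith
  have hball : ∀ y ∈ closedBall x (r / 2), r / 2 ≤ ‖y‖ := by
    intro y hy
    rw [mem_closedBall_iff_norm] at hy
    have h1 : r ≤ ‖x - y‖ + ‖y‖ := by
      rw [hr]; simpa using norm_sub_le_norm_sub_add_norm_sub x y 0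
    rw [norm_sub_rev x y] at h1
    linarith
  have hgrad : ∀ i, |pd i f x| ≤ G * (r ^ 2)⁻¹ := by
    intro i
    have := grad_est (f := f) (x₀ := x) (d := r / 2) (M := (2 * A + 1) * r⁻¹)
      (F := 16 * C * (r ^ 4)⁻¹) (c := L) i (by positivity) (by positivity)
      (fun y hy => (hall' y (by linarith [hball y hy])).1) ?_ ?_
    · refine this.trans ?_
      have e : 16 * C * (r ^ 4)⁻¹ * (r / 2) + 3 * ((2 * A + 1) * r⁻¹) / (r / 2)
        = (8 * C * r⁻¹ + 12 * A + 6) * (r ^ 2)⁻¹ := by field_simp; ring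
      rw [e]
      have h1 : r⁻¹ ≤ 1 := inv_le_one_of_one_le₀ hr1
      have : 8 * C * r⁻¹ ≤ 8 * C * 1 := by gcongr
      simp only [G]
      exact mul_le_mul_of_nonneg_right (by linarith) (by positivity)
    · intro y hy
      have h2 := hball y hy
      refine (hAf' y (by linarith)).trans ?_
      have h3 : ‖y‖⁻¹ ≤ (r / 2)⁻¹ := inv_anti₀ (by positivity) h2
      calc A * ‖y‖⁻¹ ≤ A * (r / 2)⁻¹ := by gcongr
        _ = 2 * A * r⁻¹ := by field_simp
        _ ≤ (2 * A + 1) * r⁻¹ := by gcongr; linarith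
    · intro y hy
      have h2 := hball y hy
      refine (hall' y (by linarith)).2.1.trans ?_
      calc C * (‖y‖ ^ 4)⁻¹ ≤ C * ((r / 2) ^ 4)⁻¹ := by gcongr
        _ = 16 * C * (r ^ 4)⁻¹ := by field_simp; norm_num
  have hfb : |f x| ≤ A + |L| := by
    have h1 := hAf' x (by linarith)
    have h2 : A * r⁻¹ ≤ A * 1 := by gcongr; exact inv_le_one_of_one_le₀ hr1
    have h3 : |f x| ≤ |f x - L| + |L| := by
      have := abs_add_le (f x - L) L
      simpa using this
    rw [← hr] at h1
    linarith
  have := Pfun_bound (hall' x (by linarith)).2.2 hgrad hfb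
  refine this.trans (le_of_eq ?_)
  rw [← hr]
  field_simp

lemma global_bound {P : Pl → ℝ} {U : Set Pl} (hloc : ∀ x, ∃ m, ∀ᶠ y in 𝓝[U] x, P y ≤ m)
    (hinf : ∃ m, ∀ᶠ y in Bornology.cobounded Pl, P y ≤ m) : ∃ m, ∀ y ∈ U, P y ≤ m := by
  obtain ⟨m₁, h1⟩ := hinf
  rw [← comap_norm_atTop, eventually_comap, eventually_atTop] at h1
  obtain ⟨R, hR⟩ := h1
  obtain ⟨m₂, h2⟩ : ∃ m, ∀ y ∈ closedBall (0:Pl) R, y ∈ U → P y ≤ m := by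
    refine (isCompact_closedBall (0:Pl) R).induction_on (p := fun s => ∃ m, ∀ y ∈ s, y ∈ U → P y ≤ m)
      ?_ ?_ ?_ ?_
    · exact ⟨0, by simp⟩
    · rintro s t hst ⟨m, hm⟩
      exact ⟨m, fun y hy => hm y (hst hy)⟩
    · rintro s t ⟨m, hm⟩ ⟨m', hm'⟩
      refine ⟨max m m', fun y hy hyU => ?_⟩
      rcases hy with hy | hy
      · exact (hm y hy hyU).trans (le_max_left _ _)
      · exact (hm' y hy hyU).trans (le_max_right _ _)
    · intro x _
      obtain ⟨m, hm⟩ := hloc x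
      rw [eventually_nhdsWithin_iff] at hm
      exact ⟨_, mem_nhdsWithin_of_mem_nhds hm, m, fun y hy hyU => hy hyU⟩
  refine ⟨max m₁ m₂, fun y hy => ?_⟩
  by_cases h : R ≤ ‖y‖
  · exact (hR ‖y‖ h y rfl).trans (le_max_left _ _)
  · exact (h2 y (by simpa using (not_le.1 h).le) hy).trans (le_max_right _ _)



/-- logarithmic weight -/
def wlog (x : Pl) : ℝ := Real.log (1 + nsq 0 x)

lemma wlog_eq (x : Pl) : wlog x = Real.log (1 + ‖x‖ ^ 2) := by simp [wlog, nsq]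

lemma nsq_nonneg (c x : Pl) : 0 ≤ nsq c x := by unfold nsq; positivity

lemma cd_wlog {n : WithTop ℕ∞} (x : Pl) : ContDiffAt ℝ n wlog x :=
  (contDiffAt_const.add (cd_nsq 0 x)).log (by have := nsq_nonneg 0 x; positivity)

lemma lap_wlog (x : Pl) : lap wlog x = 4 * ((1 + nsq 0 x) ^ 2)⁻¹ := by
  have hp : 0 < 1 + nsq 0 x := by have := nsq_nonneg 0 x; positivity
  have h1 : ∀ᶠ t in 𝓝 (nsq 0 x), HasDerivAt (fun t : ℝ => Real.log (1 + t)) ((1 + t)⁻¹) t := by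
    filter_upwards [lt_mem_nhds (show -1 < nsq 0 x by linarith)] with t ht
    have := ((hasDerivAt_id t).const_add 1).log (by simp; linarith)
    simpa using this
  have h2 : HasDerivAt (fun t : ℝ => (1 + t)⁻¹) (-((1 + nsq 0 x) ^ 2)⁻¹) (nsq 0 x) := by
    have := ((hasDerivAt_id (nsq 0 x)).const_add 1).inv (by simp; linarith)
    simp only [id, neg_div, one_div] at this
    exact this
  have := lap_comp (f := nsq 0) (cd_nsq 0 x) h1 h2
  rw [grad_nsq, lap_nsq] at this
  have e : lap wlog x = lap (fun y => Real.log (1 + nsq 0 y)) x := rfl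
  rw [e, this]
  field_simp
  ring

lemma exp_combo (s t : ℝ) (w l : ℝ) :
    2 * (Real.exp (-l * w + 1 / 2 * (s + t)) * Real.sinh (1 / 2 * (t - s)))
      = Real.exp (-l * w + t) - Real.exp (-l * w + s) ∧
    2 * (Real.exp (-l * w + 1 / 2 * (s + t)) * Real.cosh (1 / 2 * (t - s)))
      = Real.exp (-l * w + t) + Real.exp (-l * w + s) := by
  have e1 : Real.exp (-l * w + t) = Real.exp (-l * w + 1 / 2 * (s + t))
      * Real.exp (1 / 2 * (t - s)) := by rw [← Real.exp_add]; congr 1; ring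
  have e2 : Real.exp (-l * w + s) = Real.exp (-l * w + 1 / 2 * (s + t))
      * Real.exp (-(1 / 2 * (t - s))) := by rw [← Real.exp_add]; congr 1; ring
  rw [e1, e2, Real.sinh_eq, Real.cosh_eq]
  constructor <;> ring

lemma pow_exp {r α : ℝ} (hr : 0 < r) : (r ^ α) ^ 2 = Real.exp (2 * α * Real.log r) := by
  rw [Real.rpow_def_of_pos hr, ← Real.exp_nat_mul]; congr 1; push_cast; ring

lemma main_core (N : ℕ) (q : Fin N → Pl) (al : Fin N → ℝ)
    (hal : ∀ j, al j ∈ Set.Ioo (-1 : ℝ) 0) {l β : ℝ} (hl : 0 < l) (hβ : l + β = 2)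
    (u1 u2 : Pl → ℝ)
    (hu1 : ∀ x ∉ Set.range q, ContDiffAt ℝ 2 u1 x) (hu2 : ∀ x ∉ Set.range q, ContDiffAt ℝ 2 u2 x)
    (he1 : ∀ x ∉ Set.range q, lap u1 x = - Real.exp (-l * wlog x + u1 x))
    (he2 : ∀ x ∉ Set.range q, lap u2 x = - Real.exp (-l * wlog x + u2 x))
    (hq1 : ∀ j, ∃ L : ℝ, Tendsto (fun x => u1 x - 2 * al j * Real.log ‖x - q j‖)
      (𝓝[(Set.range q)ᶜ] (q j)) (nhds L))
    (hq2 : ∀ j, ∃ L : ℝ, Tendsto (fun x => u2 x - 2 * al j * Real.log ‖x - q j‖)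
      (𝓝[(Set.range q)ᶜ] (q j)) (nhds L))
    (hi1 : ∃ L : ℝ, Tendsto (fun x => u1 x + β * wlog x) (Bornology.cobounded Pl) (nhds L))
    (hi2 : ∃ L : ℝ, Tendsto (fun x => u2 x + β * wlog x) (Bornology.cobounded Pl) (nhds L)) :
    Set.EqOn u1 u2 (Set.range q)ᶜ := by
  have hfin : (Set.range q).Finite := Set.finite_range q
  have hopen : IsOpen (Set.range q)ᶜ := hfin.isClosed.isOpen_compl
  set f : Pl → ℝ := fun y => u2 y - u1 y with hfdef
  set a : Pl → ℝ := fun y => -l * wlog y + 1 / 2 * (u1 y + u2 y) with hadef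
  have hf2 : ∀ x ∉ Set.range q, ContDiffAt ℝ 2 f x := fun x hx => (hu2 x hx).sub (hu1 x hx)
  have ha2 : ∀ x ∉ Set.range q, ContDiffAt ℝ 2 a x := fun x hx =>
    (contDiffAt_const.mul (cd_wlog x)).add (contDiffAt_const.mul ((hu1 x hx).add (hu2 x hx)))
  have hlf0 : ∀ x ∉ Set.range q, lap f x = Real.exp (-l * wlog x + u1 x)
      - Real.exp (-l * wlog x + u2 x) := fun x hx => by
    rw [hfdef, lap_sub (hu2 x hx) (hu1 x hx), he1 x hx, he2 x hx]; ring
  have hlf : ∀ x ∉ Set.range q, lap f x = -2 * (Real.exp (a x) * Real.sinh (1 / 2 * f x)) :=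
    fun x hx => by
      rw [hlf0 x hx]
      have := (exp_combo (u1 x) (u2 x) (wlog x) l).1
      simp only [hfdef, hadef]; linarith
  set k : Pl → ℝ := fun x => l * (4 * ((1 + nsq 0 x) ^ 2)⁻¹) with hk
  have hla : ∀ x ∉ Set.range q, lap a x = - Real.exp (a x) * Real.cosh (1 / 2 * f x) - k x :=
    fun x hx => by
      have := (exp_combo (u1 x) (u2 x) (wlog x) l).2
      have hs : ContDiffAt ℝ 2 (fun y => u1 y + u2 y) x := (hu1 x hx).add (hu2 x hx)
      rw [hadef, lap_add (contDiffAt_const.mul (cd_wlog x)) (contDiffAt_const.mul hs),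
        lap_cmul _ (cd_wlog x), lap_cmul _ hs, lap_add (hu1 x hx) (hu2 x hx), he1 x hx, he2 x hx,
        lap_wlog]
      simp only [hfdef, hk]; linarith
  have hf3 : ∀ x ∉ Set.range q, ContDiffAt ℝ 3 f x := by
    have := cd_three (u := f) (F := fun x => -2 * (Real.exp (a x) * Real.sinh (1 / 2 * f x)))
      hopen hf2 (fun z hz => ?_) hlf
    · exact this
    · exact contDiffAt_const.mul ((ha2 z hz).exp.mul
        (Real.contDiff_sinh.contDiffAt.comp z (contDiffAt_const.mul (hf2 z hz))))
  have hkpos : ∀ x, 0 < k x := fun x => by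
    have := nsq_nonneg 0 x
    simp only [hk]; positivity
  have hlP : ∀ x ∉ Set.range q, ∃ A B : ℝ, lap (Pfun f a) x = 1 / 4 * Real.exp (-a x) *
      (A ^ 2 + B ^ 2 + k x * ((pd 0 f x) ^ 2 + (pd 1 f x) ^ 2)) := fun x hx =>
    lap_Pfun (hf3 x hx) (ha2 x hx) (by
      filter_upwards [hopen.mem_nhds hx] with y hy
      exact hlf y hy) (hla x hx)
  have hPc : ∀ x ∉ Set.range q, ContDiffAt ℝ 2 (Pfun f a) x := fun x hx =>
    cd_Pfun (hf3 x hx) (ha2 x hx)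
  obtain ⟨m, hm⟩ : ∃ m, ∀ y ∈ (Set.range q)ᶜ, Pfun f a y ≤ m := by
    refine global_bound (fun x => ?_) ?_
    · by_cases hx : x ∈ Set.range q
      · obtain ⟨j, rfl⟩ := hx
        have hle : 𝓝[(Set.range q)ᶜ] (q j) ≤ 𝓝[≠] (q j) :=
          nhdsWithin_mono _ (Set.compl_subset_compl.2 (by simp))
        have hΩ : (Set.range q)ᶜ ∈ 𝓝[≠] (q j) := by
          have h1 : (Set.range q \ {q j})ᶜ ∈ 𝓝 (q j) :=
            (hfin.subset Set.sdiff_subset).isClosed.isOpen_compl.mem_nhds (by simp)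
          filter_upwards [mem_nhdsWithin_of_mem_nhds h1, self_mem_nhdsWithin] with y hy1 hy2 hy3
          exact hy1 ⟨hy3, hy2⟩
        have hge : 𝓝[≠] (q j) ≤ 𝓝[(Set.range q)ᶜ] (q j) :=
          le_inf nhdsWithin_le_nhds (le_principal_iff.2 hΩ)
        obtain ⟨L1, hL1⟩ := hq1 j
        obtain ⟨L2, hL2⟩ := hq2 j
        replace hL1 := hL1.mono_left hge
        replace hL2 := hL2.mono_left hge
        have hb1 := (hL1.eventually (gt_mem_nhds (show L1 < L1 + 1 by linarith))).and
          (hL1.eventually (lt_mem_nhds (show L1 - 1 < L1 by linarith)))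
        have hb2 := (hL2.eventually (gt_mem_nhds (show L2 < L2 + 1 by linarith))).and
          (hL2.eventually (lt_mem_nhds (show L2 - 1 < L2 by linarith)))
        have hw : ∀ᶠ x in 𝓝[≠] (q j), wlog x < wlog (q j) + 1 :=
          ((cd_wlog (n := 0) (q j)).continuousAt.eventually
            (gt_mem_nhds (show wlog (q j) < wlog (q j) + 1 by linarith))).filter_mono
              nhdsWithin_le_nhds
        have hw0 : ∀ x, 0 ≤ wlog x := fun x => Real.log_nonneg (by linarith [nsq_nonneg 0 x])
        have hnb := near_bound (f := f) (a := a) (c := q j) (α := al j)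
          (C := Real.exp (L1 + 1) + Real.exp (L2 + 1))
          (C' := Real.exp (l * (wlog (q j) + 1) - 1 / 2 * (L1 + L2) + 1)) (L := L2 - L1)
          (hal j).1 (hal j).2.le ?_ ?_ ?_ ?_
        · obtain ⟨m, hm⟩ := hnb
          exact ⟨m, hm.filter_mono hle⟩
        · refine (hL2.sub hL1).congr fun x => ?_
          simp only [hfdef]; ring
        · filter_upwards [hΩ] with x hx
          exact hf2 x hx
        · filter_upwards [hΩ, hb1, hb2, self_mem_nhdsWithin] with x hx h1 h2 hxc
          have hr : 0 < ‖x - q j‖ := norm_pos_iff.2 (sub_ne_zero.2 hxc)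
          rw [hlf0 x hx, pow_exp hr, add_mul, ← Real.exp_add, ← Real.exp_add]
          have hlw : 0 ≤ l * wlog x := mul_nonneg hl.le (hw0 x)
          have i1 : Real.exp (-l * wlog x + u1 x) ≤ Real.exp (L1 + 1 + 2 * al j * Real.log ‖x - q j‖) :=
            Real.exp_le_exp.2 (by linarith [h1.1])
          have i2 : Real.exp (-l * wlog x + u2 x) ≤ Real.exp (L2 + 1 + 2 * al j * Real.log ‖x - q j‖) :=
            Real.exp_le_exp.2 (by linarith [h2.1])
          have p1 := Real.exp_pos (-l * wlog x + u1 x)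
          have p2 := Real.exp_pos (-l * wlog x + u2 x)
          rw [abs_le]; constructor <;> linarith
        · filter_upwards [hb1, hb2, hw, self_mem_nhdsWithin] with x h1 h2 h3 hxc
          have hr : 0 < ‖x - q j‖ := norm_pos_iff.2 (sub_ne_zero.2 hxc)
          rw [pow_exp hr, ← Real.exp_neg, ← Real.exp_add]
          refine Real.exp_le_exp.2 ?_
          have := mul_le_mul_of_nonneg_left h3.le hl.le
          simp only [hadef]
          linarith [h1.2, h2.2]
      · have hx' : x ∉ Set.range q := hx
        refine ⟨Pfun f a x + 1, ?_⟩
        have := (hPc x hx').continuousAt.eventually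
          (gt_mem_nhds (show Pfun f a x < Pfun f a x + 1 by linarith))
        exact (this.filter_mono nhdsWithin_le_nhds).mono fun y hy => hy.le
    · obtain ⟨L1, hL1⟩ := hi1
      obtain ⟨L2, hL2⟩ := hi2
      have hb1 := (hL1.eventually (gt_mem_nhds (show L1 < L1 + 1 by linarith))).and
          (hL1.eventually (lt_mem_nhds (show L1 - 1 < L1 by linarith)))
      have hb2 := (hL2.eventually (gt_mem_nhds (show L2 < L2 + 1 by linarith))).and
          (hL2.eventually (lt_mem_nhds (show L2 - 1 < L2 by linarith)))
      have hΩ : (Set.range q)ᶜ ∈ Bornology.cobounded Pl := Bornology.isBounded_def.1 hfin.isBounded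
      have hr1 : ∀ᶠ x in Bornology.cobounded Pl, 1 ≤ ‖x‖ := by
        rw [← comap_norm_atTop, eventually_comap, eventually_atTop]
        exact ⟨1, fun b hb x hx => hx ▸ hb⟩
      have hβ' : β = 2 - l := by linarith
      have hx2 : ∀ x, Real.exp (2 * wlog x) = (1 + ‖x‖ ^ 2) ^ 2 := fun x => by
        rw [wlog_eq, two_mul, Real.exp_add, Real.exp_log (by positivity)]
        ring
      refine inf_bound (f := f) (a := a) (C := Real.exp (L1 + 1) + Real.exp (L2 + 1))
        (C' := Real.exp (1 - 1 / 2 * (L1 + L2)) * 4) (L := L2 - L1) (by positivity) ?_ ?_ ?_ ?_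
      · refine (hL2.sub hL1).congr fun x => ?_
        simp only [hfdef]; ring
      · filter_upwards [hΩ] with x hx
        exact hf2 x hx
      · filter_upwards [hΩ, hb1, hb2, hr1] with x hx h1 h2 hr
        have hx4 : Real.exp (-(2 * wlog x)) ≤ (‖x‖ ^ 4)⁻¹ := by
          rw [Real.exp_neg, hx2]
          refine inv_anti₀ (by positivity) ?_
          nlinarith [sq_nonneg ‖x‖]
        have i1 : Real.exp (-l * wlog x + u1 x) ≤ Real.exp (L1 + 1) * Real.exp (-(2 * wlog x)) := by
          rw [← Real.exp_add]
          refine Real.exp_le_exp.2 ?_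
          have := h1.1
          rw [hβ'] at this; linarith
        have i2 : Real.exp (-l * wlog x + u2 x) ≤ Real.exp (L2 + 1) * Real.exp (-(2 * wlog x)) := by
          rw [← Real.exp_add]
          refine Real.exp_le_exp.2 ?_
          have := h2.1
          rw [hβ'] at this; linarith
        have j1 := mul_le_mul_of_nonneg_left hx4 (Real.exp_pos (L1 + 1)).le
        have j2 := mul_le_mul_of_nonneg_left hx4 (Real.exp_pos (L2 + 1)).le
        have p1 := Real.exp_pos (-l * wlog x + u1 x)
        have p2 := Real.exp_pos (-l * wlog x + u2 x)
        rw [hlf0 x hx, abs_le]; constructor <;> linarith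
      · filter_upwards [hb1, hb2, hr1] with x h1 h2 hr
        have i1 : Real.exp (-a x) ≤ Real.exp (1 - 1 / 2 * (L1 + L2)) * Real.exp (2 * wlog x) := by
          rw [← Real.exp_add]
          refine Real.exp_le_exp.2 ?_
          have g1 := h1.2
          have g2 := h2.2
          rw [hβ'] at g1 g2
          simp only [hadef]; linarith
        refine i1.trans ?_
        rw [hx2, mul_assoc]
        have : (1 + ‖x‖ ^ 2) ^ 2 ≤ 4 * ‖x‖ ^ 4 := by
          have h5 : 1 ≤ ‖x‖ ^ 2 := one_le_pow₀ hr
          nlinarith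
        gcongr
  have hPl : ∀ x, x ∉ Set.range q → ContDiffAt ℝ 2 (Pfun f a) x ∧ 0 ≤ lap (Pfun f a) x := by
    intro x hx
    refine ⟨hPc x hx, ?_⟩
    obtain ⟨A, B, h⟩ := hlP x hx
    rw [h]
    have := hkpos x
    positivity
  have hgrad : ∀ x ∉ Set.range q, ∀ i, pd i f x = 0 := by
    intro x hx
    have hcst : Pfun f a =ᶠ[𝓝 x] fun _ => Pfun f a x := by
      filter_upwards [hopen.mem_nhds hx] with y hy
      exact le_antisymm (liouville q hPl hm hy hx) (liouville q hPl hm hx hy)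
    have h0 : lap (Pfun f a) x = 0 := by rw [lap_congr hcst, lap_const]
    obtain ⟨A, B, h⟩ := hlP x hx
    rw [h0] at h
    have hk0 := hkpos x
    have he := Real.exp_pos (-a x)
    have h1 : A ^ 2 + B ^ 2 + k x * ((pd 0 f x) ^ 2 + (pd 1 f x) ^ 2) = 0 := by
      rcases mul_eq_zero.1 h.symm with h | h
      · linarith
      · exact h
    have h2 : (pd 0 f x) ^ 2 + (pd 1 f x) ^ 2 ≤ 0 := by
      by_contra! hc
      have := mul_pos hk0 hc
      nlinarith [sq_nonneg A, sq_nonneg B]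
    intro i
    have h3 : (pd 0 f x) ^ 2 = 0 := by nlinarith [sq_nonneg (pd 0 f x), sq_nonneg (pd 1 f x)]
    have h4 : (pd 1 f x) ^ 2 = 0 := by nlinarith [sq_nonneg (pd 0 f x), sq_nonneg (pd 1 f x)]
    fin_cases i
    · exact pow_eq_zero_iff (by norm_num) |>.1 h3
    · exact pow_eq_zero_iff (by norm_num) |>.1 h4
  intro x hx
  have hx' : x ∉ Set.range q := hx
  have hz : ∀ i, pd i (pd i f) x = 0 := fun i => by
    have : pd i f =ᶠ[𝓝 x] fun _ => 0 := by
      filter_upwards [hopen.mem_nhds hx] with y hy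
      exact hgrad y hy i
    rw [pd_congr this, pd_const]
  have h0 : lap f x = 0 := by rw [lap_eq, hz, hz, add_zero]
  rw [hlf0 x hx'] at h0
  have := Real.exp_injective (sub_eq_zero.1 h0)
  linarith

/-- Uniqueness for the subcritical singular Liouville equation on the sphere,
planar form (Theorem 1.7(i)). -/
theorem uniqueness_subcritical_sphere (N : ℕ) (q : Fin N → Pl)
    (hq : Function.Injective q) (al : Fin N → ℝ)
    (hal : ∀ j, al j ∈ Set.Ioo (-1 : ℝ) 0)
    (ρ : ℝ) (hρ : 0 < ρ) (hρ' : ρ < 4*π*(2 + ∑ j, al j))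
    (u1 u2 : Pl → ℝ) (h1 : SphSol N q al ρ u1) (h2 : SphSol N q al ρ u2) :
    Set.EqOn u1 u2 (Set.range q)ᶜ := by
  obtain ⟨c1, e1, s1, -, i1⟩ := h1
  obtain ⟨c2, e2, s2, -, i2⟩ := h2
  have hopen : IsOpen (Set.range q)ᶜ := (Set.finite_range q).isClosed.isOpen_compl
  have hpi := Real.pi_pos
  set l := (4*π*(2 + ∑ j, al j) - ρ)/(4*π) with hl
  have hl0 : 0 < l := by
    rw [hl]; exact div_pos (by linarith) (by positivity)
  have hh : ∀ x : Pl, (1 + ‖x‖ ^ 2) ^ (-l) = Real.exp (-l * wlog x) := fun x => by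
    rw [Real.rpow_def_of_pos (by positivity), wlog_eq, mul_comm]
  refine main_core N q al hal (l := l) (β := (ρ - 4*π*(∑ j, al j))/(4*π)) hl0 ?_ u1 u2
    (fun x hx => c1.contDiffAt (hopen.mem_nhds hx)) (fun x hx => c2.contDiffAt (hopen.mem_nhds hx))
    ?_ ?_ s1 s2 ?_ ?_
  · rw [hl]; field_simp; ring
  · intro x hx
    have := e1 x hx
    rw [hh, ← Real.exp_add] at this
    linarith
  · intro x hx
    have := e2 x hx
    rw [hh, ← Real.exp_add] at this
    linarith
  · simpa only [wlog_eq] using i1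
  · simpa only [wlog_eq] using i2
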